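/- arXiv:2412.05942 — 2 statements merged into one kernel-verified Lean document; each statement's English description precedes it below -/
import Mathlib

section
/- Let r ≥ 1 and let B be an r×r doubly stochastic real matrix (nonnegative entries, every row sum and every column sum equal to 1) all of whose entries are strictly less than 1. Then ∏_{i,j} (1 − B(i,j)) ≤ Σ_{σ ∈ S_r} ∏_{i=1}^r B(i,σ(i))·(1 − B(i,σ(i))) ≤ 2^{r/2} · ∏_{i,j} (1 − B(i,j)). (Equivalently, the matrix B̂ with entries B̂(i,j) = B(i,j)(1−B(i,j)) / (∏_{i',j'} (1−B(i',j')))^{1/r} satisfies 1 ≤ perm(B̂) ≤ 2^{r/2}.) -/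
open scoped BigOperators

noncomputable section

/-!
Write `A i j = B i j * (1 - B i j)`; the sum in the middle is the permanent of `A`.

Lower bound. Consider weighted matchings of the rows with the columns in which a row or a column may
also be left unmatched at its own price. With no edge available the weight is a product of row sums
times a product of column sums, and the weighted arithmetic-geometric mean inequality bounds it from
below by a product over the edges. The edges are then turned on one at a time: leaving two vertices
unmatched is negatively correlated across opposite sides of the graph, and optimising over the two
prices attached to the edge gains exactly the factor `1 - B e`. With all edges turned on, only the
perfect matchings survive.

Upper bound. By Gibbs' variational principle, `log (permanent A)` is an energy plus the entropy of
the random permutation with law proportional to `∏ i, A i (σ i)`. Expose its values in a uniformly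
random order of the rows. In an order and its reverse, the mass still available at the value `k`
is the mass before, respectively after, `k`, and a telescoping potential on `[0, 1]` shows that
each row loses at most `log 2 / 2` against its Bethe entropy. The Bethe entropy bound itself follows
by monotonicity along the segment from the marginals of a row to the corresponding row of `B`.
-/

section Matchings

open Finset

variable {ι κ : Type*} [DecidableEq ι] [DecidableEq κ]

/-- The matchings of the complete bipartite graph with sides `R` and `C`, each encoded as its set of
edges. -/
def matchings (R : Finset ι) (C : Finset κ) : Finset (Finset (ι × κ)) :=
  {M ∈ (R ×ˢ C).powerset | ∀ e ∈ M, ∀ f ∈ M, e.1 = f.1 ∨ e.2 = f.2 → e = f}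

/-- The monomer–dimer partition function of the complete bipartite graph with sides `R` and `C`: a
matching is weighted by `a` on its edges and by `u` and `v` on the unmatched vertices. -/
def matchingSum (a : ι × κ → ℝ) (u : ι → ℝ) (v : κ → ℝ) (R : Finset ι) (C : Finset κ) : ℝ :=
  ∑ M ∈ matchings R C,
    (∏ e ∈ M, a e) * (∏ i ∈ R \ M.image Prod.fst, u i) * ∏ j ∈ C \ M.image Prod.snd, v j

theorem subset_product_of_mem_matchings {R : Finset ι} {C : Finset κ} {M : Finset (ι × κ)}
    (hM : M ∈ matchings R C) : M ⊆ R ×ˢ C :=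
  mem_powerset.1 (mem_filter.1 hM).1

theorem insert_mem_matchings {R : Finset ι} {C : Finset κ} {e : ι × κ} (he : e ∈ R ×ˢ C)
    {M : Finset (ι × κ)} (hM : M ∈ matchings (R.erase e.1) (C.erase e.2)) :
    insert e M ∈ matchings R C := by
  simp only [matchings, mem_filter, mem_powerset, subset_iff, mem_product, mem_erase,
    mem_insert] at hM he ⊢
  grind

theorem erase_mem_matchings {R : Finset ι} {C : Finset κ} {e : ι × κ} {M : Finset (ι × κ)}
    (hM : M ∈ matchings R C) (he : e ∈ M) :
    M.erase e ∈ matchings (R.erase e.1) (C.erase e.2) := by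
  simp only [matchings, mem_filter, mem_powerset, subset_iff, mem_product, mem_erase] at hM ⊢
  grind

theorem notMem_of_mem_matchings_erase {R : Finset ι} {C : Finset κ} {i : ι} {M : Finset (ι × κ)}
    (hM : M ∈ matchings (R.erase i) C) (k : κ) : (i, k) ∉ M := fun h => by
  simpa using subset_product_of_mem_matchings hM h

theorem filter_matchings_eq_matchings_erase (R : Finset ι) (C : Finset κ) (i : ι) :
    {M ∈ matchings R C | i ∉ M.image Prod.fst} = matchings (R.erase i) C := by
  ext M
  simp only [matchings, mem_filter, mem_powerset, subset_iff, mem_product, mem_erase, mem_image,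
    Prod.forall]
  grind

theorem sum_matchings_eq_add_sum_insert (f : Finset (ι × κ) → ℝ) {R : Finset ι} {i : ι}
    (hi : i ∈ R) (C : Finset κ) :
    ∑ M ∈ matchings R C, f M = ∑ M ∈ matchings (R.erase i) C, f M +
      ∑ k ∈ C, ∑ M ∈ matchings (R.erase i) (C.erase k), f (insert (i, k) M) := by
  have matched : ∑ M ∈ matchings R C with ¬ i ∉ M.image Prod.fst, f M =
      ∑ x ∈ C.sigma fun k => matchings (R.erase i) (C.erase k), f (insert (i, x.1) x.2) := by
    symm
    refine sum_bij (fun x _ => insert (i, x.1) x.2) ?_ ?_ ?_ fun _ _ => rfl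
    · rintro ⟨k, M⟩ hx
      obtain ⟨hk, hM⟩ := mem_sigma.1 hx
      simp [insert_mem_matchings (e := (i, k)) (mem_product.2 ⟨hi, hk⟩) hM]
    · rintro ⟨k, M⟩ hx ⟨k', M'⟩ hx' h
      have hM : ∀ l, (i, l) ∉ M := notMem_of_mem_matchings_erase (mem_sigma.1 hx).2
      have hM' : ∀ l, (i, l) ∉ M' := notMem_of_mem_matchings_erase (mem_sigma.1 hx').2
      dsimp only at h
      obtain rfl : k = k' := by
        have := h ▸ mem_insert_self (i, k) M
        simpa [hM' k] using this
      rw [← erase_insert (hM k), ← erase_insert (hM' k), h]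
    · intro M hM
      obtain ⟨hM, hiM⟩ := mem_filter.1 hM
      obtain ⟨k, he⟩ : ∃ k, (i, k) ∈ M := by simpa using hiM
      have hk := (mem_product.1 (subset_product_of_mem_matchings hM he)).2
      exact ⟨⟨k, M.erase (i, k)⟩, mem_sigma.2 ⟨hk, erase_mem_matchings (e := (i, k)) hM he⟩,
        insert_erase he⟩
  rw [← sum_filter_add_sum_filter_not _ (fun M => i ∉ M.image Prod.fst), matched, sum_sigma,
    filter_matchings_eq_matchings_erase]

variable {a a' : ι × κ → ℝ} {u u' : ι → ℝ} {v v' : κ → ℝ} {R : Finset ι} {C : Finset κ}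

theorem matchingSum_nonneg (ha : ∀ e ∈ R ×ˢ C, 0 ≤ a e) (hu : ∀ i ∈ R, 0 ≤ u i)
    (hv : ∀ j ∈ C, 0 ≤ v j) : 0 ≤ matchingSum a u v R C :=
  sum_nonneg fun _ hM => mul_nonneg (mul_nonneg
    (prod_nonneg fun e he => ha e (subset_product_of_mem_matchings hM he))
    (prod_nonneg fun i hi => hu i (mem_sdiff.1 hi).1))
    (prod_nonneg fun j hj => hv j (mem_sdiff.1 hj).1)

theorem matchingSum_congr (ha : ∀ e ∈ R ×ˢ C, a e = a' e) (hu : ∀ i ∈ R, u i = u' i)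
    (hv : ∀ j ∈ C, v j = v' j) : matchingSum a u v R C = matchingSum a' u' v' R C := by
  refine sum_congr rfl fun M hM => ?_
  rw [prod_congr rfl fun e he => ha e (subset_product_of_mem_matchings hM he),
    prod_congr rfl fun i hi => hu i (mem_sdiff.1 hi).1,
    prod_congr rfl fun j hj => hv j (mem_sdiff.1 hj).1]

theorem matchingSum_swap (a : ι × κ → ℝ) (u : ι → ℝ) (v : κ → ℝ) (R : Finset ι) (C : Finset κ) :
    matchingSum (a ∘ Prod.swap) v u C R = matchingSum a u v R C := by
  refine sum_nbij' (fun M => M.image Prod.swap) (fun M => M.image Prod.swap) ?_ ?_ ?_ ?_ ?_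
  · intro M hM
    simp only [matchings, mem_filter, mem_powerset, subset_iff, mem_product, mem_image] at hM ⊢
    grind [Prod.swap]
  · intro M hM
    simp only [matchings, mem_filter, mem_powerset, subset_iff, mem_product, mem_image] at hM ⊢
    grind [Prod.swap]
  · intro M _
    simp [image_image]
  · intro M _
    simp [image_image]
  · intro M _
    rw [prod_image Prod.swap_injective.injOn]
    simp [image_image, Function.comp_def, mul_right_comm]

theorem matchingSum_expand_left (a : ι × κ → ℝ) (u : ι → ℝ) (v : κ → ℝ) {i : ι} (hi : i ∈ R)
    (C : Finset κ) :
    matchingSum a u v R C = u i * matchingSum a u v (R.erase i) C +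
      ∑ k ∈ C, a (i, k) * matchingSum a u v (R.erase i) (C.erase k) := by
  rw [matchingSum, sum_matchings_eq_add_sum_insert _ hi, matchingSum, mul_sum]
  congr 1
  · refine sum_congr rfl fun M hM => ?_
    have hiM : i ∈ R \ M.image Prod.fst := by
      simpa [hi] using notMem_of_mem_matchings_erase hM
    rw [← mul_prod_erase _ u hiM, ← erase_sdiff_comm]
    ring
  · refine sum_congr rfl fun k _ => ?_
    rw [matchingSum, mul_sum]
    refine sum_congr rfl fun M hM => ?_
    rw [prod_insert (notMem_of_mem_matchings_erase hM k), image_insert, image_insert,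
      sdiff_insert, sdiff_insert, ← erase_sdiff_comm, ← erase_sdiff_comm]
    ring

theorem matchingSum_zero (u : ι → ℝ) (v : κ → ℝ) (R : Finset ι) (C : Finset κ) :
    matchingSum 0 u v R C = (∏ i ∈ R, u i) * ∏ j ∈ C, v j := by
  rw [matchingSum, sum_eq_single_of_mem ∅ (by simp [matchings])]
  · simp
  · intro M _ hM
    obtain ⟨e, he⟩ := nonempty_iff_ne_empty.2 hM
    rw [prod_eq_zero he rfl, zero_mul, zero_mul]

theorem matchingSum_add_single_left (a : ι × κ → ℝ) (u : ι → ℝ) (v : κ → ℝ) {i : ι} (hi : i ∈ R)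
    (C : Finset κ) (c : ℝ) :
    matchingSum a (u + Pi.single i c) v R C =
      matchingSum a u v R C + c * matchingSum a u v (R.erase i) C := by
  have h (D : Finset κ) : matchingSum a (u + Pi.single i c) v (R.erase i) D =
      matchingSum a u v (R.erase i) D :=
    matchingSum_congr (fun _ _ => rfl) (by simp +contextual) fun _ _ => rfl
  rw [matchingSum_expand_left _ _ _ hi, matchingSum_expand_left a u _ hi]
  simp only [h, Pi.add_apply, Pi.single_eq_same]
  ring

theorem matchingSum_add_single_right (a : ι × κ → ℝ) (u : ι → ℝ) (v : κ → ℝ) (R : Finset ι) {j : κ}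
    (hj : j ∈ C) (c : ℝ) :
    matchingSum a u (v + Pi.single j c) R C =
      matchingSum a u v R C + c * matchingSum a u v R (C.erase j) := by
  simpa only [matchingSum_swap] using matchingSum_add_single_left (a ∘ Prod.swap) v u hj R c

theorem matchingSum_add_single_left_right (a : ι × κ → ℝ) (u : ι → ℝ) (v : κ → ℝ) {i : ι}
    (hi : i ∈ R) {j : κ} (hj : j ∈ C) (c d : ℝ) :
    matchingSum a (u + Pi.single i c) (v + Pi.single j d) R C =
      matchingSum a u v R C + c * matchingSum a u v (R.erase i) C +
        d * matchingSum a u v R (C.erase j) +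
        c * d * matchingSum a u v (R.erase i) (C.erase j) := by
  rw [matchingSum_add_single_left _ _ _ hi, matchingSum_add_single_right _ _ _ _ hj,
    matchingSum_add_single_right _ _ _ _ hj]
  ring

theorem matchingSum_add_single_edge (a : ι × κ → ℝ) (u : ι → ℝ) (v : κ → ℝ) {e : ι × κ}
    (he : e ∈ R ×ˢ C) (c : ℝ) :
    matchingSum (a + Pi.single e c) u v R C =
      matchingSum a u v R C + c * matchingSum a u v (R.erase e.1) (C.erase e.2) := by
  obtain ⟨i, j⟩ := e
  obtain ⟨hi, hj⟩ := mem_product.1 he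
  have h (D : Finset κ) : matchingSum (a + Pi.single (i, j) c) u v (R.erase i) D =
      matchingSum a u v (R.erase i) D := by
    refine matchingSum_congr (fun e he => ?_) (fun _ _ => rfl) fun _ _ => rfl
    have : e ≠ (i, j) := by rintro rfl; simp at he
    simp [this]
  rw [matchingSum_expand_left _ _ _ hi, matchingSum_expand_left a u _ hi]
  simp only [h, Pi.add_apply, Pi.single_apply, Prod.mk.injEq, true_and, add_mul, sum_add_distrib,
    ite_mul, zero_mul, sum_ite_eq', hj, if_true, add_assoc]

/-- Two vertices on the same side are negatively correlated as soon as opposite vertices are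
positively correlated after one deletion. -/
theorem matchingSum_mul_le_mul_same_side (ha : ∀ e, 0 ≤ a e) {i i' : ι} (hi : i ∈ R) (hne : i ≠ i')
    (H : ∀ k ∈ C, matchingSum a u v ((R.erase i).erase i') C *
        matchingSum a u v (R.erase i) (C.erase k) ≤
      matchingSum a u v (R.erase i) C * matchingSum a u v ((R.erase i).erase i') (C.erase k)) :
    matchingSum a u v R C * matchingSum a u v ((R.erase i).erase i') C ≤
      matchingSum a u v (R.erase i) C * matchingSum a u v (R.erase i') C := by
  have hi' : i ∈ R.erase i' := mem_erase.2 ⟨hne, hi⟩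
  rw [matchingSum_expand_left _ _ _ hi, matchingSum_expand_left _ _ _ hi',
    erase_right_comm (a := i'), add_mul, mul_add, sum_mul, mul_sum]
  refine add_le_add (le_of_eq (by ring)) (sum_le_sum fun k hk => ?_)
  linarith [mul_le_mul_of_nonneg_left (H k hk) (ha (i, k))]

theorem matchingSum_mul_le_mul_opposite_side (ha : ∀ e, 0 ≤ a e) (hu : ∀ i, 0 ≤ u i)
    (hv : ∀ j, 0 ≤ v j) {i : ι} {j : κ} (hi : i ∈ R) (hj : j ∈ C) :
    matchingSum a u v (R.erase i) C * matchingSum a u v R (C.erase j) ≤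
      matchingSum a u v R C * matchingSum a u v (R.erase i) (C.erase j) := by
  induction hn : R.card generalizing R C i j with
  | zero => simp_all
  | succ n ih =>
    have hc : (R.erase i).card = n := by rw [card_erase_of_mem hi, hn]; rfl
    have same_side (k) (hk : k ∈ C.erase j) : matchingSum a u v (R.erase i) C *
          matchingSum a u v (R.erase i) ((C.erase j).erase k) ≤
        matchingSum a u v (R.erase i) (C.erase j) * matchingSum a u v (R.erase i) (C.erase k) := by
      have := matchingSum_mul_le_mul_same_side (a := a ∘ Prod.swap) (u := v) (v := u)
        (C := R.erase i) (fun e => ha e.swap) hj (ne_of_mem_erase hk).symm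
      simp only [matchingSum_swap] at this
      exact this fun x hx => (mul_comm _ _).trans_le (ih hx hk hc)
    rw [matchingSum_expand_left _ _ _ hi C, matchingSum_expand_left _ _ _ hi (C.erase j), mul_add,
      add_mul, mul_sum, sum_mul, ← add_sum_erase C _ hj]
    refine add_le_add (le_of_eq (by ring)) (le_add_of_nonneg_of_le ?_ (sum_le_sum fun k hk => ?_))
    · have h0 (S : Finset ι) (T : Finset κ) : 0 ≤ matchingSum a u v S T :=
        matchingSum_nonneg (fun e _ => ha e) (fun i _ => hu i) fun j _ => hv j
      exact mul_nonneg (mul_nonneg (ha _) (h0 _ _)) (h0 _ _)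
    · linarith [mul_le_mul_of_nonneg_left (same_side k hk) (ha (i, k))]

end Matchings

theorem exists_pos_mul_eq_of_mul_le {x y c : ℝ} (hx : 0 ≤ x) (hy : 0 ≤ y) (hc : 0 < c)
    (h : x * y ≤ c) : ∃ x' y' : ℝ, 0 < x' ∧ 0 < y' ∧ x ≤ x' ∧ y ≤ y' ∧ x' * y' = c := by
  rcases hx.eq_or_lt with rfl | hx
  · exact ⟨c / (y + 1), y + 1, by positivity, by positivity, by positivity, by linarith,
      by field_simp⟩
  · exact ⟨x, c / x, hx, by positivity, le_rfl, (le_div_iff₀ hx).2 (by linarith), by field_simp⟩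

theorem one_sub_mul_le_of_pos_of_forall_mul_rpow_le {m x y d k b : ℝ} (hm : 0 < m) (hd : 0 < d)
    (hx : 0 ≤ x) (hy : 0 ≤ y) (hxy : x * y ≤ m * d) (hb : 0 ≤ b) (hb1 : b < 1)
    (H : ∀ s t : ℝ, 0 < s → 0 < t →
      k * (s * t) ^ b ≤ m + b * s * x + b * t * y + b * s * (b * t) * d) :
    (1 - b) * k ≤ m + b * (1 - b) * d := by
  obtain ⟨x', y', hx', hy', hxx', hyy', hxy'⟩ :=
    exists_pos_mul_eq_of_mul_le hx hy (mul_pos hm hd) hxy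
  have hb' : 0 < 1 - b := sub_pos.2 hb1
  -- The choice making the two linear terms equal and the right-hand side a perfect square.
  set s := m / ((1 - b) * x') with hs
  set t := m / ((1 - b) * y') with ht
  set q := (1 - b) ^ 2 * d / m with hq
  have hs0 : 0 < s := by positivity
  have ht0 : 0 < t := by positivity
  have hq0 : 0 < q := by positivity
  have hst : s * t = q⁻¹ := by
    rw [hs, ht, hq, inv_div, div_mul_div_comm, div_eq_div_iff (by positivity) (by positivity)]
    linear_combination -(m * (1 - b) ^ 2) * hxy'
  have rhs_le : m + b * s * x + b * t * y + b * s * (b * t) * d ≤ m / (1 - b) ^ 2 :=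
    calc m + b * s * x + b * t * y + b * s * (b * t) * d
        ≤ m + b * s * x' + b * t * y' + b * s * (b * t) * d := by gcongr
      _ = m + b * (s * x') + b * (t * y') + b ^ 2 * (s * t) * d := by ring
      _ = m + b * (m / (1 - b)) + b * (m / (1 - b)) + b ^ 2 * (m / (1 - b) ^ 2) := by
        rw [hst, hs, ht, hq]; field_simp
      _ = m / (1 - b) ^ 2 := by field_simp; ring
  have hk : k ≤ m / (1 - b) ^ 2 * q ^ b := by
    have := (H s t hs0 ht0).trans rhs_le
    rwa [hst, Real.inv_rpow hq0.le, ← div_eq_mul_inv, div_le_iff₀ (by positivity)] at this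
  have amgm : q ^ b ≤ (1 - b) + b * q := by
    simpa using Real.geom_mean_le_arith_mean2_weighted hb'.le hb zero_le_one hq0.le (by ring)
  calc (1 - b) * k ≤ (1 - b) * (m / (1 - b) ^ 2 * ((1 - b) + b * q)) := by
        gcongr
        exact hk.trans (by gcongr)
    _ = m + b * (1 - b) * d := by rw [hq]; field_simp

/-- The effect of turning on one edge: `s` and `t` price its two ends when left unmatched, and
optimising over these prices leaves the factor `1 - b`. -/
theorem one_sub_mul_le_of_forall_mul_rpow_le {m x y d k b : ℝ} (hm : 0 ≤ m) (hd : 0 ≤ d)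
    (hx : 0 ≤ x) (hy : 0 ≤ y) (hxy : x * y ≤ m * d) (hb : 0 ≤ b) (hb1 : b ≤ 1)
    (H : ∀ s t : ℝ, 0 < s → 0 < t →
      k * (s * t) ^ b ≤ m + b * s * x + b * t * y + b * s * (b * t) * d) :
    (1 - b) * k ≤ m + b * (1 - b) * d := by
  rcases hb1.eq_or_lt with rfl | hb1
  · simpa using hm
  refine le_of_forall_pos_le_add fun ε hε => ?_
  have perturbed : (1 - b) * k ≤ m + ε / 2 + b * (1 - b) * (d + ε / 2) := by
    refine one_sub_mul_le_of_pos_of_forall_mul_rpow_le (by positivity) (by positivity) hx hy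
      (by nlinarith) hb hb1 fun s t hs ht => (H s t hs ht).trans ?_
    gcongr <;> linarith
  nlinarith [mul_nonneg hb (sub_nonneg.2 hb1.le), mul_nonneg hb hb]

section Permutations

open Finset

variable {ι : Type*} [Fintype ι] [DecidableEq ι]

/-- The permutations that agree with `τ` outside of `R`; sums over all permutations are computed by
induction on `R`. -/
def permsAgreeingOff (R : Finset ι) (τ : Equiv.Perm ι) : Finset (Equiv.Perm ι) :=
  {σ | ∀ x ∉ R, σ x = τ x}

theorem mem_permsAgreeingOff {R : Finset ι} {σ τ : Equiv.Perm ι} :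
    σ ∈ permsAgreeingOff R τ ↔ ∀ x ∉ R, σ x = τ x := by
  simp [permsAgreeingOff]

theorem permsAgreeingOff_empty (τ : Equiv.Perm ι) : permsAgreeingOff ∅ τ = {τ} := by
  ext σ
  simp [mem_permsAgreeingOff, Equiv.ext_iff]

theorem permsAgreeingOff_univ (τ : Equiv.Perm ι) : permsAgreeingOff univ τ = univ := by
  simp [permsAgreeingOff]

theorem image_eq_of_mem_permsAgreeingOff {R : Finset ι} {σ τ : Equiv.Perm ι}
    (h : σ ∈ permsAgreeingOff R τ) : R.image σ = R.image τ := by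
  have hc : Rᶜ.image σ = Rᶜ.image τ :=
    image_congr fun x hx => mem_permsAgreeingOff.1 h x (by simpa using hx)
  have image_compl (ρ : Equiv.Perm ι) : Rᶜ.image ρ = (R.image ρ)ᶜ := by
    simp [compl_eq_univ_sdiff, image_sdiff _ _ ρ.injective]
  rwa [image_compl, image_compl, compl_inj_iff] at hc

theorem swap_mul_mem_permsAgreeingOff {R : Finset ι} {i j : ι} (hi : i ∈ R) {τ : Equiv.Perm ι}
    (hj : j ∈ R.image τ) : Equiv.swap (τ i) j * τ ∈ permsAgreeingOff R τ := by
  refine mem_permsAgreeingOff.2 fun x hx => ?_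
  obtain ⟨y, hy, rfl⟩ := mem_image.1 hj
  refine Equiv.swap_apply_of_ne_of_ne (fun h => hx ?_) fun h => hx ?_
  · rwa [τ.injective h]
  · rwa [τ.injective h]

theorem filter_permsAgreeingOff_insert {R : Finset ι} {i j : ι} (hi : i ∉ R) {τ : Equiv.Perm ι}
    (hj : j ∈ (insert i R).image τ) :
    {σ ∈ permsAgreeingOff (insert i R) τ | σ i = j} =
      permsAgreeingOff R (Equiv.swap (τ i) j * τ) := by
  have h := mem_permsAgreeingOff.1 (swap_mul_mem_permsAgreeingOff (mem_insert_self i R) hj)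
  ext σ
  simp only [mem_filter, mem_permsAgreeingOff, mem_insert, not_or] at h ⊢
  refine ⟨fun hσ x hx => ?_, fun hσ => ⟨fun x hx => (hσ x hx.2).trans (h x hx), ?_⟩⟩
  · by_cases hxi : x = i
    · simp [hxi, hσ.2]
    · rw [hσ.1 x ⟨hxi, hx⟩, h x ⟨hxi, hx⟩]
  · simp [hσ i hi]

theorem sum_permsAgreeingOff_insert {M : Type*} [AddCommMonoid M] (f : Equiv.Perm ι → M)
    {R : Finset ι} {i : ι} (hi : i ∉ R) (τ : Equiv.Perm ι) :
    ∑ σ ∈ permsAgreeingOff (insert i R) τ, f σ = ∑ j ∈ (insert i R).image τ,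
      ∑ σ ∈ permsAgreeingOff R (Equiv.swap (τ i) j * τ), f σ := by
  rw [← sum_fiberwise_of_maps_to (g := fun σ : Equiv.Perm ι => σ i) (t := (insert i R).image τ)]
  · exact sum_congr rfl fun j hj => by rw [filter_permsAgreeingOff_insert hi hj]
  · intro σ hσ
    rw [← image_eq_of_mem_permsAgreeingOff hσ]
    exact mem_image_of_mem _ (mem_insert_self i R)

theorem image_swap_mul_eq_erase {R : Finset ι} {i j : ι} (hi : i ∉ R) {τ : Equiv.Perm ι}
    (hj : j ∈ (insert i R).image τ) :
    R.image (Equiv.swap (τ i) j * τ) = ((insert i R).image τ).erase j := by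
  set ρ := Equiv.swap (τ i) j * τ with hρ
  have hρi : ρ i = j := by simp [hρ]
  have hρτ : ρ ∈ permsAgreeingOff (insert i R) τ :=
    swap_mul_mem_permsAgreeingOff (mem_insert_self i R) hj
  rw [← image_eq_of_mem_permsAgreeingOff hρτ, ← hρi, ← image_erase ρ.injective, erase_insert hi]

theorem permanent_eq_sum_prod_apply {R : Type*} [CommSemiring R] (A : Matrix ι ι R) :
    A.permanent = ∑ σ : Equiv.Perm ι, ∏ i, A i (σ i) := by
  rw [← Matrix.permanent_transpose]
  rfl

theorem matchingSum_zero_zero_eq_sum_permsAgreeingOff (a : ι × ι → ℝ) (R : Finset ι)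
    (τ : Equiv.Perm ι) :
    matchingSum a 0 0 R (R.image τ) = ∑ σ ∈ permsAgreeingOff R τ, ∏ i ∈ R, a (i, σ i) := by
  induction R using Finset.induction_on generalizing τ with
  | empty => simp [matchingSum, matchings, permsAgreeingOff_empty, filter_singleton]
  | insert i R hi ih =>
    rw [matchingSum_expand_left _ _ _ (mem_insert_self i R), sum_permsAgreeingOff_insert _ hi,
      Pi.zero_apply, zero_mul, zero_add]
    refine sum_congr rfl fun j hj => ?_
    rw [erase_insert hi, ← image_swap_mul_eq_erase hi hj, ih, mul_sum]
    refine sum_congr rfl fun σ hσ => ?_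
    have hσi : σ i = j := by simp [mem_permsAgreeingOff.1 hσ i hi]
    rw [prod_insert hi, hσi]

theorem matchingSum_zero_zero_eq_permanent (A : Matrix ι ι ℝ) :
    matchingSum (fun e => A e.1 e.2) 0 0 univ univ = A.permanent := by
  simpa [permsAgreeingOff_univ, permanent_eq_sum_prod_apply] using
    matchingSum_zero_zero_eq_sum_permsAgreeingOff (fun e => A e.1 e.2) univ 1

end Permutations

section LowerBound

open Finset

variable {ι κ : Type*} [Fintype ι] [Fintype κ]

theorem prod_mul_rpow_le_prod_sum_mul_prod_sum {B : ι × κ → ℝ} (hB0 : ∀ e, 0 ≤ B e)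
    (hrow : ∀ i, ∑ j, B (i, j) = 1) (hcol : ∀ j, ∑ i, B (i, j) = 1) {y z : ι × κ → ℝ}
    (hy : ∀ e, 0 < y e) (hz : ∀ e, 0 < z e) :
    ∏ e, (y e * z e) ^ B e ≤ (∏ i, ∑ j, B (i, j) * y (i, j)) * ∏ j, ∑ i, B (i, j) * z (i, j) := by
  calc ∏ e, (y e * z e) ^ B e
      = (∏ i, ∏ j, y (i, j) ^ B (i, j)) * ∏ j, ∏ i, z (i, j) ^ B (i, j) := by
        simp only [Real.mul_rpow (hy _).le (hz _).le, prod_mul_distrib, Fintype.prod_prod_type]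
        rw [prod_comm (f := fun i j => z (i, j) ^ B (i, j))]
    _ ≤ _ := by
        gcongr with i _ j _
        · exact prod_nonneg fun j _ => prod_nonneg fun i _ => (Real.rpow_pos_of_pos (hz _) _).le
        · exact prod_nonneg fun i _ => sum_nonneg fun j _ => mul_nonneg (hB0 _) (hy _).le
        · exact fun i _ => prod_nonneg fun j _ => (Real.rpow_pos_of_pos (hy _) _).le
        · exact Real.geom_mean_le_arith_mean_weighted _ _ _ (fun j _ => hB0 _) (hrow i)
            fun j _ => (hy _).le
        · exact fun j _ => prod_nonneg fun i _ => (Real.rpow_pos_of_pos (hz _) _).le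
        · exact Real.geom_mean_le_arith_mean_weighted _ _ _ (fun i _ => hB0 _) (hcol j)
            fun i _ => (hz _).le

variable [DecidableEq ι] [DecidableEq κ]

theorem prod_one_sub_mul_prod_rpow_le_matchingSum {B : ι × κ → ℝ} (hB0 : ∀ e, 0 ≤ B e)
    (hB1 : ∀ e, B e ≤ 1) (hrow : ∀ i, ∑ j, B (i, j) = 1) (hcol : ∀ j, ∑ i, B (i, j) = 1)
    (F : Finset (ι × κ)) {y z : ι × κ → ℝ} (hy : ∀ e, 0 < y e) (hz : ∀ e, 0 < z e) :
    (∏ e ∈ F, (1 - B e)) * ∏ e ∈ Fᶜ, (y e * z e) ^ B e ≤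
      matchingSum (∑ e ∈ F, Pi.single e (B e * (1 - B e))) (∑ e ∈ Fᶜ, Pi.single e.1 (B e * y e))
        (∑ e ∈ Fᶜ, Pi.single e.2 (B e * z e)) univ univ := by
  induction F using Finset.induction_on generalizing y z with
  | empty =>
    simpa [matchingSum_zero, Fintype.sum_prod_type, Finset.sum_apply, Pi.single_apply] using
      prod_mul_rpow_le_prod_sum_mul_prod_sum hB0 hrow hcol hy hz
  | insert f F hf ih =>
    set a : ι × κ → ℝ := ∑ e ∈ F, Pi.single e (B e * (1 - B e))
    set u : ι → ℝ := ∑ e ∈ (insert f F)ᶜ, Pi.single e.1 (B e * y e)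
    set v : κ → ℝ := ∑ e ∈ (insert f F)ᶜ, Pi.single e.2 (B e * z e)
    have ha0 : 0 ≤ a := sum_nonneg fun e _ =>
      Pi.single_nonneg.2 (mul_nonneg (hB0 e) (sub_nonneg.2 (hB1 e)))
    have hu0 : 0 ≤ u := sum_nonneg fun e _ => Pi.single_nonneg.2 (mul_nonneg (hB0 e) (hy e).le)
    have hv0 : 0 ≤ v := sum_nonneg fun e _ => Pi.single_nonneg.2 (mul_nonneg (hB0 e) (hz e).le)
    have h0 (R : Finset ι) (C : Finset κ) : 0 ≤ matchingSum a u v R C :=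
      matchingSum_nonneg (fun e _ => ha0 e) (fun i _ => hu0 i) fun j _ => hv0 j
    rw [sum_insert hf, prod_insert hf, mul_assoc, add_comm (Pi.single f _),
      matchingSum_add_single_edge _ _ _ (mem_product.2 ⟨mem_univ _, mem_univ _⟩)]
    refine one_sub_mul_le_of_forall_mul_rpow_le (h0 _ _) (h0 _ _) (h0 (univ.erase f.1) univ)
      (h0 univ (univ.erase f.2)) (matchingSum_mul_le_mul_opposite_side ha0 hu0 hv0 (mem_univ f.1)
      (mem_univ f.2)) (hB0 f) (hB1 f) fun s t hs ht => ?_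
    have h := ih (y := Function.update y f s) (z := Function.update z f t)
      (by grind [Function.update_apply]) (by grind [Function.update_apply])
    have hupdate (x : ι × κ → ℝ) (r : ℝ) (e) (he : e ∈ (insert f F)ᶜ) :
        Function.update x f r e = x e :=
      Function.update_of_ne (by rintro rfl; simp at he) _ _
    have hprod : ∏ e ∈ (insert f F)ᶜ, (Function.update y f s e * Function.update z f t e) ^ B e =
        ∏ e ∈ (insert f F)ᶜ, (y e * z e) ^ B e := prod_congr rfl fun e he => by
      rw [hupdate y s e he, hupdate z t e he]
    have hsum_u : ∑ e ∈ (insert f F)ᶜ, Pi.single e.1 (B e * Function.update y f s e) = u :=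
      sum_congr rfl fun e he => by rw [hupdate y s e he]
    have hsum_v : ∑ e ∈ (insert f F)ᶜ, Pi.single e.2 (B e * Function.update z f t e) = v :=
      sum_congr rfl fun e he => by rw [hupdate z t e he]
    have hf' : f ∉ (insert f F)ᶜ := by simp
    rw [← insert_compl_insert hf, prod_insert hf', sum_insert hf', sum_insert hf', hprod, hsum_u,
      hsum_v, Function.update_self, Function.update_self, add_comm _ u, add_comm _ v,
      matchingSum_add_single_left_right _ _ _ (mem_univ _) (mem_univ _)] at h
    linarith

theorem prod_one_sub_le_permanent {B : Matrix ι ι ℝ} (hB : B ∈ doublyStochastic ℝ ι) :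
    ∏ i, ∏ j, (1 - B i j) ≤ (B.map fun x => x * (1 - x)).permanent := by
  have h := prod_one_sub_mul_prod_rpow_le_matchingSum (B := fun e => B e.1 e.2)
    (fun _ => nonneg_of_mem_doublyStochastic hB) (fun _ => le_one_of_mem_doublyStochastic hB)
    (sum_row_of_mem_doublyStochastic hB) (sum_col_of_mem_doublyStochastic hB) univ (y := 1)
    (z := 1) (fun _ => one_pos) (fun _ => one_pos)
  rw [compl_univ, prod_empty, sum_empty, sum_empty, univ_sum_single, mul_one,
    Fintype.prod_prod_type] at h
  exact h.trans_eq (matchingSum_zero_zero_eq_permanent (B.map fun x => x * (1 - x)))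

end LowerBound

section IntervalInequality

open Real Set

theorem le_sum_mul_abs_of_convexOn {κ : Type*} (S : Finset κ) (c m : κ → ℝ) {f : ℝ → ℝ} {x y : ℝ}
    (hf : ConvexOn ℝ (Icc x y) f) (hx : f x ≤ ∑ k ∈ S, c k * |x - m k|)
    (hy : f y ≤ ∑ k ∈ S, c k * |y - m k|)
    (hm : ∀ i ∈ S, m i ∈ Icc x y → f (m i) ≤ ∑ k ∈ S, c k * |m i - m k|) {z : ℝ}
    (hz : z ∈ Icc x y) : f z ≤ ∑ k ∈ S, c k * |z - m k| := by
  classical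
  induction S using Finset.induction_on generalizing f x y with
  | empty =>
    rw [Finset.sum_empty] at *
    exact (hf.le_max_of_mem_Icc (left_mem_Icc.2 (hz.1.trans hz.2))
      (right_mem_Icc.2 (hz.1.trans hz.2)) hz).trans (max_le hx hy)
  | insert i S hi ih =>
    simp only [Finset.sum_insert hi, ← sub_le_iff_le_add'] at hx hy hm ⊢
    have convexOn_left {l u : ℝ} (hlu : Icc l u ⊆ Icc x y) (hum : u ≤ m i) :
        ConvexOn ℝ (Icc l u) fun z => f z - c i * |z - m i| := by
      refine ((hf.subset hlu (convex_Icc l u)).add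
        (((LinearMap.mulLeft ℝ (c i)).convexOn (convex_Icc l u)).add_const (-(c i * m i)))).congr ?_
      intro z hz
      simp only [Pi.add_apply, LinearMap.mulLeft_apply,
        abs_of_nonpos (sub_nonpos.2 (hz.2.trans hum))]
      ring
    have convexOn_right {l u : ℝ} (hlu : Icc l u ⊆ Icc x y) (hml : m i ≤ l) :
        ConvexOn ℝ (Icc l u) fun z => f z - c i * |z - m i| := by
      refine ((hf.subset hlu (convex_Icc l u)).add
        (((LinearMap.mulLeft ℝ (-c i)).convexOn (convex_Icc l u)).add_const (c i * m i))).congr ?_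
      intro z hz
      simp only [Pi.add_apply, LinearMap.mulLeft_apply,
        abs_of_nonneg (sub_nonneg.2 (hml.trans hz.1))]
      ring
    have hm' (k : κ) (hk : k ∈ S) := hm k (Finset.mem_insert_of_mem hk)
    rcases le_total y (m i) with hyi | hiy
    · exact ih (convexOn_left subset_rfl hyi) hx hy hm' hz
    rcases le_total (m i) x with hix | hxi
    · exact ih (convexOn_right subset_rfl hix) hx hy hm' hz
    have hi' := hm i (Finset.mem_insert_self i S) ⟨hxi, hiy⟩
    rcases le_total z (m i) with hzi | hiz
    · have hsub : Icc x (m i) ⊆ Icc x y := Icc_subset_Icc_right hiy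
      exact ih (convexOn_left hsub le_rfl) hx hi' (fun k hk h => hm' k hk (hsub h)) ⟨hz.1, hzi⟩
    · have hsub : Icc (m i) y ⊆ Icc x y := Icc_subset_Icc_left hxi
      exact ih (convexOn_right hsub le_rfl) hi' hy (fun k hk h => hm' k hk (hsub h)) ⟨hiz, hz.2⟩

/-- The excess of the entropy contribution of the piece `[a, b]` of a partition of `[0, 1]` over
the increment of `x ↦ negMulLog (1 - x) - negMulLog x`. The entropy bound for a partition follows
by dominating this excess by the increments of a function, see `intervalExcess_le`. -/
def intervalExcess (a b : ℝ) : ℝ :=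
  a * (log a - log b) + (1 - b) * (log (1 - b) - log (1 - a)) + 2 * negMulLog (1 - (b - a))

theorem intervalExcess_one_sub (a b : ℝ) :
    intervalExcess (1 - b) (1 - a) = intervalExcess a b := by
  simp only [intervalExcess, sub_sub_cancel, sub_sub_sub_cancel_left]
  ring

theorem intervalExcess_zero_left (b : ℝ) : intervalExcess 0 b = negMulLog (1 - b) := by
  simp only [intervalExcess, sub_zero, log_one, negMulLog]
  ring

theorem convexOn_mul_log_sub_log_add {t : ℝ} (ht : 0 < t) :
    ConvexOn ℝ (Ici 0) fun x => x * (log x - log (x + t)) := by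
  have hcont : ContinuousOn (fun x => x * (log x - log (x + t))) (Ici 0) := by
    simp only [mul_sub]
    exact continuous_mul_log.continuousOn.sub (continuousOn_id.mul
      ((continuous_id.add_const t).continuousOn.log fun x hx =>
        (add_pos_of_nonneg_of_pos hx ht).ne'))
  have hlog {x : ℝ} (hx : 0 < x) :
      HasDerivAt (fun x => log x - log (x + t)) (1 / x - 1 / (x + t)) x :=
    ((hasDerivAt_id x).log hx.ne').sub
      (((hasDerivAt_id x).add_const t).log (add_pos hx ht).ne')
  refine convexOn_of_hasDerivWithinAt2_nonneg (convex_Ici 0) hcont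
    (f' := fun x => log x - log (x + t) + t * (x + t)⁻¹)
    (f'' := fun x => t ^ 2 / (x * (x + t) ^ 2)) ?_ ?_ ?_ <;>
    intro x hx <;> simp only [interior_Ici, mem_Ioi] at hx <;>
    have hxt : 0 < x + t := add_pos hx ht
  · refine (((hasDerivAt_id x).mul (hlog hx)).congr_deriv ?_).hasDerivWithinAt
    simp only [id]
    field_simp
    ring
  · have hinv := (((hasDerivAt_id x).add_const t).inv hxt.ne').const_mul t
    refine (((hlog hx).add hinv).congr_deriv ?_).hasDerivWithinAt
    simp only [id]
    field_simp
    ring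
  · positivity

theorem convexOn_intervalExcess_add {t : ℝ} (ht : 0 < t) :
    ConvexOn ℝ (Icc 0 (1 - t)) fun a => intervalExcess a (a + t) := by
  have hleft := (convexOn_mul_log_sub_log_add ht).subset Icc_subset_Ici_self
    (convex_Icc 0 (1 - t))
  have hright : ConvexOn ℝ (Icc 0 (1 - t)) fun a =>
      (1 - t - a) * (log (1 - t - a) - log (1 - t - a + t)) := by
    refine ⟨convex_Icc _ _, fun x hx y hy p q hp hq hpq => ?_⟩
    have h := hleft.2 (x := 1 - t - x) (y := 1 - t - y) ⟨by linarith [hx.2], by linarith [hx.1]⟩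
      ⟨by linarith [hy.2], by linarith [hy.1]⟩ hp hq hpq
    have hcomb : p • (1 - t - x) + q • (1 - t - y) = 1 - t - (p • x + q • y) := by
      simp only [smul_eq_mul]
      linear_combination (1 - t) * hpq
    rwa [hcomb] at h
  refine ((hleft.add hright).add_const (2 * negMulLog (1 - t))).congr fun a _ => ?_
  have hadd : 1 - t - a + t = 1 - a := by ring
  simp only [Pi.add_apply, intervalExcess, add_sub_cancel_left, hadd, ← sub_sub,
    sub_right_comm 1 a t]

theorem two_mul_inv_le_inv_sq_add_inv {b : ℝ} (hb0 : 0 < b) (hb1 : b < 1) :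
    2 * (1 - (b - 1 / 4))⁻¹ ≤ 1 / 4 * (b ^ 2)⁻¹ + (1 - b)⁻¹ := by
  have hc : 0 < 1 - b := sub_pos.2 hb1
  have hd : 0 < 5 / 4 - b := by linarith
  have hcubic : 0 ≤ 5 / 16 - 9 / 16 * b - b ^ 2 / 2 + b ^ 3 := by
    -- `63 / 100` approximates the minimizer of the cubic on `[0, 1]`.
    nlinarith [mul_nonneg hb0.le (sq_nonneg (b - 63 / 100)), sq_nonneg (b - 63 / 100)]
  rw [← sub_nonneg]
  calc 0 ≤ (5 / 16 - 9 / 16 * b - b ^ 2 / 2 + b ^ 3) / (b ^ 2 * (1 - b) * (5 / 4 - b)) := by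
        positivity
    _ = 1 / 4 * (b ^ 2)⁻¹ + (1 - b)⁻¹ - 2 * (1 - (b - 1 / 4))⁻¹ := by
        rw [show 1 - (b - 1 / 4) = 5 / 4 - b by ring, eq_sub_iff_add_eq]
        have : 5 - b * 4 ≠ 0 := by linarith
        field_simp
        ring

theorem convexOn_intervalExcess_one_fourth :
    ConvexOn ℝ (Icc (1 / 4) 1) (intervalExcess (1 / 4)) := by
  have hsub {b : ℝ} : HasDerivAt (fun b : ℝ => 1 - b) (-1) b := (hasDerivAt_id b).const_sub 1
  have hsub' {b : ℝ} : HasDerivAt (fun b : ℝ => 1 - (b - 1 / 4)) (-1) b :=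
    ((hasDerivAt_id b).sub_const (1 / 4)).const_sub 1
  refine (convexOn_of_hasDerivWithinAt2_nonneg (convex_Icc _ _)
    (f := fun b => 1 / 4 * (log (1 / 4) - log b) - negMulLog (1 - b) - (1 - b) * log (1 - 1 / 4)
      + 2 * negMulLog (1 - (b - 1 / 4)))
    (f' := fun b => -(1 / 4 * b⁻¹) - log (1 - b) - 1 + log (1 - 1 / 4)
      + 2 * (log (1 - (b - 1 / 4)) + 1))
    (f'' := fun b => 1 / 4 * (b ^ 2)⁻¹ + (1 - b)⁻¹ - 2 * (1 - (b - 1 / 4))⁻¹)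
    ?_ ?_ ?_ ?_).congr fun b _ => ?_
  · have hlog : ContinuousOn log (Icc (1 / 4) 1) := continuousOn_log.mono fun x hx => by
      simp only [mem_compl_iff, mem_singleton_iff]
      linarith [hx.1]
    fun_prop
  rotate_left 3
  · simp only [intervalExcess, negMulLog]
    ring
  all_goals
    intro b hb
    simp only [interior_Icc, mem_Ioo] at hb
    have hb0 : 0 < b := by linarith
    have hb1 : 0 < 1 - b := by linarith
    have hb2 : 0 < 1 - (b - 1 / 4) := by linarith
  · refine ((((((hasDerivAt_log hb0.ne').const_sub (log (1 / 4))).const_mul (1 / 4)).sub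
      ((hasDerivAt_negMulLog hb1.ne').comp b hsub)).sub (hsub.mul_const (log (1 - 1 / 4)))).add
      (((hasDerivAt_negMulLog hb2.ne').comp b hsub').const_mul 2)
      |>.congr_deriv ?_).hasDerivWithinAt
    ring
  · refine ((((((hasDerivAt_inv hb0.ne').const_mul (1 / 4)).neg.sub (hsub.log hb1.ne')).sub_const
      1).add_const (log (1 - 1 / 4))).add (((hsub'.log hb2.ne').add_const 1).const_mul 2)
      |>.congr_deriv ?_).hasDerivWithinAt
    ring
  · exact sub_nonneg.2 (two_mul_inv_le_inv_sq_add_inv hb0 hb.2)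

theorem log_one_div_four : log (1 / 4) = -(2 * log 2) := by
  rw [show (1 / 4 : ℝ) = 2⁻¹ ^ 2 by norm_num, log_pow, log_inv]
  push_cast
  ring

theorem three_mul_log_two_sub_one_lt_log_three : 3 * log 2 - 1 < log 3 := by
  have h : log (8 / 3) < 1 := by
    rw [log_lt_iff_lt_exp (by norm_num)]
    linarith [exp_one_gt_d9]
  rw [log_div (by norm_num) (by norm_num), show (8 : ℝ) = 2 ^ 3 by norm_num, log_pow] at h
  push_cast at h
  linarith

theorem intervalExcess_self (a : ℝ) : intervalExcess a a = 0 := by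
  simp only [intervalExcess, sub_self, sub_zero, mul_zero, negMulLog_one, add_zero]

theorem intervalExcess_one_fourth_three_fourths :
    intervalExcess (1 / 4) (3 / 4) = log 2 - log 3 / 2 := by
  have h4 : log (3 / 4) = log 3 - 2 * log 2 := by
    rw [div_eq_mul_one_div, log_mul (by norm_num) (by norm_num), log_one_div_four, sub_eq_add_neg]
  have h2 : log (1 / 2) = -log 2 := by rw [one_div, log_inv]
  norm_num only [intervalExcess, negMulLog, h4, log_one_div_four, h2]
  ring

theorem intervalExcess_one_fourth_one : intervalExcess (1 / 4) 1 = log 2 / 2 := by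
  norm_num only [intervalExcess, negMulLog, log_one_div_four, log_one]
  ring

/-- The piecewise linear function on `[0, 1]` whose increments dominate `intervalExcess`. It
vanishes at `0` and has slope `3 * log 2 - 1` outside `[1 / 4, 3 / 4]` and `1 - log 2` inside. -/
def excessPotential (x : ℝ) : ℝ :=
  (3 * log 2 - 1) * x + (2 * log 2 - 1) * (|x - 3 / 4| - |x - 1 / 4| - 1 / 2)

theorem excessPotential_one_sub (x : ℝ) : excessPotential (1 - x) = log 2 - excessPotential x := by
  have h (y : ℝ) : |1 - x - y| = |x - (1 - y)| := by rw [abs_sub_comm]; congr 1; ring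
  simp only [excessPotential, h]
  norm_num
  ring

theorem excessPotential_zero : excessPotential 0 = 0 := by
  norm_num [excessPotential, abs_div]

theorem excessPotential_one : excessPotential 1 = log 2 := by
  simpa only [sub_zero, excessPotential_zero] using excessPotential_one_sub 0

theorem intervalExcess_zero_left_le {b : ℝ} (hb0 : 0 ≤ b) (hb1 : b ≤ 1) :
    intervalExcess 0 b ≤ excessPotential b := by
  have hL := log_two_gt_d9
  have hself : negMulLog (1 - b) ≤ b := by
    simpa only [sub_sub_cancel] using negMulLog_le_one_sub_self (sub_nonneg.2 hb1)
  have htangent : negMulLog (1 - b) ≤ log 2 / 2 + (1 - log 2) * (b - 1 / 2) := by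
    have h := negMulLog_le_one_sub_self (x := 2 * (1 - b)) (by linarith)
    rw [negMulLog_mul, negMulLog] at h
    linarith
  rw [intervalExcess_zero_left, excessPotential]
  rcases abs_cases (b - 1 / 4) with ⟨h, _⟩ | ⟨h, _⟩ <;>
    rcases abs_cases (b - 3 / 4) with ⟨h', _⟩ | ⟨h', _⟩ <;> rw [h, h'] <;> nlinarith

theorem intervalExcess_one_fourth_le {b : ℝ} (hb : b ∈ Icc (1 / 4) 1) :
    intervalExcess (1 / 4) b ≤ excessPotential b - excessPotential (1 / 4) := by
  have hL := log_two_gt_d9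
  have hc := log_two_lt_d9
  have h3 := three_mul_log_two_sub_one_lt_log_three
  have haff : ConvexOn ℝ (Icc (1 / 4) 1) fun b =>
      intervalExcess (1 / 4) b - log 2 * (b - 1 / 4) + (2 * log 2 - 1) / 2 := by
    refine (convexOn_intervalExcess_one_fourth.add
      (((LinearMap.mulLeft ℝ (-log 2)).convexOn (convex_Icc _ _)).add_const
        (log 2 / 4 + (2 * log 2 - 1) / 2))).congr fun b _ => ?_
    simp only [Pi.add_apply, LinearMap.mulLeft_apply]
    ring
  have h := le_sum_mul_abs_of_convexOn {3 / 4} (fun _ => 2 * log 2 - 1) id haff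
    (by norm_num [intervalExcess_self, abs_div]; linarith)
    (by norm_num [intervalExcess_one_fourth_one, abs_div]; linarith)
    (by norm_num [intervalExcess_one_fourth_three_fourths, abs_div]; linarith) hb
  rw [Finset.sum_singleton, id] at h
  simp only [excessPotential, abs_of_nonneg (sub_nonneg.2 hb.1)]
  norm_num [abs_div]
  linarith

theorem le_excessPotential_add_sub_of_convexOn {f : ℝ → ℝ} {t x y : ℝ}
    (hf : ConvexOn ℝ (Icc x y) f) (hx : f x ≤ excessPotential (x + t) - excessPotential x)
    (hy : f y ≤ excessPotential (y + t) - excessPotential y)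
    (hleft : 1 / 4 ∈ Icc x y →
      f (1 / 4) ≤ excessPotential (1 / 4 + t) - excessPotential (1 / 4))
    (hright : 3 / 4 - t ∈ Icc x y →
      f (3 / 4 - t) ≤ excessPotential (3 / 4) - excessPotential (3 / 4 - t))
    {z : ℝ} (hz : z ∈ Icc x y) : f z ≤ excessPotential (z + t) - excessPotential z := by
  have hconv : ConvexOn ℝ (Icc x y) fun a =>
      f a + (2 * log 2 - 1) * (|a - 3 / 4| + |a + t - 1 / 4|) - (3 * log 2 - 1) * t := by
    have habs (m : ℝ) : ConvexOn ℝ (Icc x y) fun a => |a - m| := convexOn_dist m (convex_Icc x y)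
    have hk : 0 ≤ 2 * log 2 - 1 := by linarith [log_two_gt_d9]
    refine ((hf.add (((habs (3 / 4)).add (habs (1 / 4 - t))).smul hk)).add_const
      (-((3 * log 2 - 1) * t))).congr fun a _ => ?_
    simp only [Pi.add_apply, smul_eq_mul, sub_sub_eq_add_sub]
    ring
  have hiff (a : ℝ) :
      f a + (2 * log 2 - 1) * (|a - 3 / 4| + |a + t - 1 / 4|) - (3 * log 2 - 1) * t ≤
          ∑ k, (2 * log 2 - 1) * |a - ![1 / 4, 3 / 4 - t] k| ↔
        f a ≤ excessPotential (a + t) - excessPotential a := by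
    rw [Fin.sum_univ_two, Matrix.cons_val_zero, Matrix.cons_val_one, Matrix.cons_val_zero,
      sub_sub_eq_add_sub, excessPotential, excessPotential, ← sub_nonneg,
      ← sub_nonneg (b := f a)]
    ring_nf
  have h := le_sum_mul_abs_of_convexOn Finset.univ (fun _ => 2 * log 2 - 1)
    ![1 / 4, 3 / 4 - t] hconv
  simp only [hiff, Fin.forall_fin_two, Matrix.cons_val_zero, Matrix.cons_val_one,
    Finset.mem_univ, true_implies, sub_add_cancel] at h
  exact h hx hy ⟨hleft, hright⟩ hz

theorem intervalExcess_le {a b : ℝ} (ha : 0 ≤ a) (hab : a < b) (hb : b ≤ 1) :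
    intervalExcess a b ≤ excessPotential b - excessPotential a := by
  obtain ⟨t, ht, rfl⟩ : ∃ t, 0 < t ∧ b = a + t := ⟨b - a, sub_pos.2 hab, by ring⟩
  have hsymm {a b : ℝ} (h : intervalExcess (1 - b) (1 - a) ≤
      excessPotential (1 - a) - excessPotential (1 - b)) :
      intervalExcess a b ≤ excessPotential b - excessPotential a := by
    rw [intervalExcess_one_sub, excessPotential_one_sub, excessPotential_one_sub] at h
    linarith
  have hzero := intervalExcess_zero_left_le ht.le (by linarith)
  refine le_excessPotential_add_sub_of_convexOn (convexOn_intervalExcess_add ht) ?_ ?_ ?_ ?_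
    (show a ∈ Icc 0 (1 - t) from ⟨ha, by linarith⟩)
  · rwa [zero_add, excessPotential_zero, sub_zero]
  · apply hsymm
    rwa [sub_add_cancel, sub_self, sub_sub_cancel, excessPotential_zero, sub_zero]
  · intro h
    exact intervalExcess_one_fourth_le ⟨by linarith, by linarith [h.2]⟩
  · intro h
    rw [sub_add_cancel]
    apply hsymm
    rw [show (1 : ℝ) - 3 / 4 = 1 / 4 by norm_num]
    exact intervalExcess_one_fourth_le ⟨by linarith [h.2], by linarith [h.1]⟩

end IntervalInequality

section OrderedPartition

open Real Finset

/-- A function on `[0, 1]` whose increment over a piece `[a, b]` of an ordered partition dominates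
the entropy contribution of that piece. -/
def partitionPotential (x : ℝ) : ℝ :=
  negMulLog (1 - x) - negMulLog x + excessPotential x

theorem partitionPotential_zero : partitionPotential 0 = 0 := by
  simp only [partitionPotential, excessPotential_zero, sub_zero, negMulLog_zero, negMulLog_one,
    add_zero]

theorem partitionPotential_one : partitionPotential 1 = log 2 := by
  simp only [partitionPotential, excessPotential_one, sub_self, negMulLog_zero, negMulLog_one,
    zero_add]

theorem mul_log_add_log_le_partitionPotential_sub {a b : ℝ} (ha : 0 ≤ a) (hab : a ≤ b)
    (hb : b ≤ 1) :
    (b - a) * (log b + log (1 - a)) + 2 * negMulLog (1 - (b - a)) ≤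
      partitionPotential b - partitionPotential a := by
  rcases hab.eq_or_lt with rfl | hab
  · simp only [sub_self, zero_mul, sub_zero, negMulLog_one, mul_zero, add_zero, le_refl]
  · have h := intervalExcess_le ha hab hb
    simp only [partitionPotential, intervalExcess] at h ⊢
    simp only [negMulLog] at h ⊢
    linarith

variable {ι α : Type*} [LinearOrder α]

theorem sum_filter_le_eq_add_sum_filter_lt {M : Type*} [AddCommMonoid M] {s : Finset ι}
    {e : ι → α} (he : Set.InjOn e s) (p : ι → M) {k : ι} (hk : k ∈ s) :
    ∑ j ∈ s with e j ≤ e k, p j = p k + ∑ j ∈ s with e j < e k, p j := by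
  classical
  rw [← sum_insert (s := s.filter fun j => e j < e k) (by simp)]
  congr 1
  ext j
  simp only [mem_filter, mem_insert, le_iff_lt_or_eq]
  constructor
  · rintro ⟨hj, hlt | heq⟩
    · exact .inr ⟨hj, hlt⟩
    · exact .inl (he hj hk heq)
  · rintro (rfl | ⟨hj, hlt⟩)
    · exact ⟨hk, .inr rfl⟩
    · exact ⟨hj, .inl hlt⟩

theorem sum_sub_sum_filter_lt {M G : Type*} [AddCommMonoid M] [AddCommGroup G] (f : M → G)
    (p : ι → M) {e : ι → α} (s : Finset ι) (he : Set.InjOn e s) :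
    ∑ k ∈ s, (f (∑ j ∈ s with e j ≤ e k, p j) - f (∑ j ∈ s with e j < e k, p j)) =
      f (∑ k ∈ s, p k) - f 0 := by
  classical
  induction s using Finset.induction_on_max_value e with
  | empty => simp
  | insert m s hm hmax ih =>
    have hlt {k : ι} (hk : k ∈ s) : e k < e m :=
      (hmax k hk).lt_of_ne fun h => hm (he (mem_insert_of_mem hk) (mem_insert_self m s) h ▸ hk)
    have hmle : (insert m s).filter (fun j => e j ≤ e m) = insert m s :=
      filter_true_of_mem (forall_mem_insert _ _ _ |>.2 ⟨le_rfl, hmax⟩)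
    have hmlt : (insert m s).filter (fun j => e j < e m) = s := by
      rw [filter_insert, if_neg (lt_irrefl _), filter_true_of_mem fun _ => hlt]
    have hrest : ∀ k ∈ s, f (∑ j ∈ insert m s with e j ≤ e k, p j) -
          f (∑ j ∈ insert m s with e j < e k, p j) =
        f (∑ j ∈ s with e j ≤ e k, p j) - f (∑ j ∈ s with e j < e k, p j) := fun k hk => by
      rw [filter_insert, filter_insert, if_neg (hlt hk).not_ge, if_neg (hlt hk).not_gt]
    rw [sum_insert hm, hmle, hmlt, sum_congr rfl hrest, ih (he.mono (coe_subset.2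
      (subset_insert m s))), sub_add_sub_cancel]

theorem sum_mul_log_add_log_le [Fintype ι] {p : ι → ℝ} (hp : p ∈ stdSimplex ℝ ι) {e : ι → α}
    (he : Function.Injective e) :
    ∑ k, p k * (log (∑ j with e j ≤ e k, p j) + log (∑ j with e k ≤ e j, p j)) ≤
      log 2 - 2 * ∑ k, negMulLog (1 - p k) := by
  have hstep (k : ι) :
      p k * (log (∑ j with e j ≤ e k, p j) + log (∑ j with e k ≤ e j, p j)) +
          2 * negMulLog (1 - p k) ≤
        partitionPotential (∑ j with e j ≤ e k, p j) -
          partitionPotential (∑ j with e j < e k, p j) := by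
    have hsplit := sum_filter_le_eq_add_sum_filter_lt he.injOn p (mem_univ k)
    have hcompl : ∑ j with e k ≤ e j, p j = 1 - ∑ j with e j < e k, p j := by
      rw [eq_sub_iff_add_eq', ← hp.2, ← sum_filter_add_sum_filter_not univ (e · < e k)]
      simp only [not_lt]
    have h := mul_log_add_log_le_partitionPotential_sub (sum_nonneg fun j _ => hp.1 j)
      (hsplit.trans_ge (le_add_of_nonneg_left (hp.1 k)))
      ((sum_le_sum_of_subset_of_nonneg (filter_subset _ _) fun j _ _ => hp.1 j).trans_eq hp.2)
    rwa [← hcompl, hsplit, add_sub_cancel_right, ← hsplit] at h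
  have hsum := sum_le_sum fun k (_ : k ∈ univ) => hstep k
  rw [sum_sub_sum_filter_lt partitionPotential p univ he.injOn, hp.2, partitionPotential_one,
    partitionPotential_zero, sub_zero, sum_add_distrib, ← mul_sum] at hsum
  linarith

end OrderedPartition

section BetheEntropy

open Real Finset

variable {ι : Type*} [Fintype ι]

theorem sum_sq_div_one_sub_le {x v : ι → ℝ} (hx : x ∈ stdSimplex ℝ ι) (hv : ∑ j, v j = 0)
    (hxv : ∀ j, x j = 0 → v j = 0) : ∑ j, v j ^ 2 / (1 - x j) ≤ ∑ j, v j ^ 2 / x j := by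
  classical
  have hterm (j : ι) : v j ^ 2 / (1 - x j) ≤ x j * ∑ k, v k ^ 2 / x k := by
    have hnonneg (k : ι) : 0 ≤ v k ^ 2 / x k := div_nonneg (sq_nonneg _) (hx.1 k)
    have hxj : ∑ k ∈ univ.erase j, x k = 1 - x j := by
      rw [eq_sub_iff_add_eq, sum_erase_add _ _ (mem_univ j), hx.2]
    have hvj : ∑ k ∈ univ.erase j, v k = -v j := by
      rw [← add_eq_zero_iff_eq_neg, sum_erase_add _ _ (mem_univ j), hv]
    have hcauchy : v j ^ 2 ≤ (1 - x j) * ∑ k ∈ univ.erase j, v k ^ 2 / x k := by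
      rw [← neg_sq, ← hvj, ← hxj]
      refine sum_sq_le_sum_mul_sum_of_sq_le_mul _ (fun k _ => hx.1 k) (fun k _ => hnonneg k)
        fun k _ => ?_
      rcases eq_or_ne (x k) 0 with h | h
      · simp [hxv k h]
      · rw [mul_div_cancel₀ _ h]
    rcases eq_or_ne (x j) 0 with h | h
    · simp [hxv j h, h]
    rcases (mem_Icc_of_mem_stdSimplex hx j).2.eq_or_lt with h1 | h1
    · rw [h1, sub_self, div_zero, one_mul]
      exact sum_nonneg fun k _ => hnonneg k
    · rw [div_le_iff₀ (sub_pos.2 h1), ← sum_erase_add _ _ (mem_univ j)]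
      calc v j ^ 2 = x j * v j ^ 2 + (1 - x j) * v j ^ 2 := by ring
        _ ≤ x j * ((1 - x j) * ∑ k ∈ univ.erase j, v k ^ 2 / x k) + (1 - x j) * v j ^ 2 := by
            gcongr
            exact hx.1 j
        _ = x j * (∑ k ∈ univ.erase j, v k ^ 2 / x k + v j ^ 2 / x j) * (1 - x j) := by
            field_simp
  calc ∑ j, v j ^ 2 / (1 - x j) ≤ ∑ j, x j * ∑ k, v k ^ 2 / x k := sum_le_sum fun j _ => hterm j
    _ = ∑ j, v j ^ 2 / x j := by rw [← sum_mul, hx.2, one_mul]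

theorem continuousOn_mul_log_segment {p b : ℝ} (hp : 0 ≤ p) (hb : 0 ≤ b) (hpb : p ≠ 0 → b ≠ 0) :
    ContinuousOn (fun t => p * log ((1 - t) * p + t * b)) (Set.Icc 0 1) := by
  rcases hp.eq_or_lt with rfl | hp
  · simpa only [zero_mul] using continuousOn_const
  have hb := hb.lt_of_ne' (hpb hp.ne')
  refine continuousOn_const.mul (ContinuousOn.log (by fun_prop) fun t ht => ?_)
  exact ((convex_Ioi (0 : ℝ)) hp hb (sub_nonneg.2 ht.2) ht.1 (sub_add_cancel 1 t)).ne'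

theorem hasDerivAt_mul_log_segment {p b t : ℝ} (hp : 0 ≤ p) (hb : 0 ≤ b) (hpb : p ≠ 0 → b ≠ 0)
    (ht : t ∈ Set.Ioo 0 1) :
    HasDerivAt (fun t => p * log ((1 - t) * p + t * b))
      (b - p - t * ((b - p) ^ 2 / ((1 - t) * p + t * b))) t := by
  have ht0 := ht.1
  have ht1 := sub_pos.2 ht.2
  rcases hp.eq_or_lt with rfl | hp
  · have hzero : b - 0 - t * ((b - 0) ^ 2 / ((1 - t) * 0 + t * b)) = 0 := by
      rcases eq_or_ne b 0 with rfl | hb0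
      · simp
      · field_simp
        ring
    simpa only [zero_mul, hzero] using hasDerivAt_const t (0 : ℝ)
  have hpos : 0 < (1 - t) * p + t * b := by positivity
  have hsegment : HasDerivAt (fun t => (1 - t) * p + t * b) (b - p) t := by
    refine ((((hasDerivAt_id t).const_sub 1).mul_const p).add
      ((hasDerivAt_id t).mul_const b)).congr_deriv ?_
    ring
  refine ((hsegment.log hpos.ne').const_mul p).congr_deriv ?_
  field_simp
  ring

theorem apply_eq_zero_of_apply_eq_one {b : ι → ℝ} (hb : b ∈ stdSimplex ℝ ι) {j k : ι}
    (hj : b j = 1) (hkj : k ≠ j) : b k = 0 := by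
  classical
  have hrest : ∑ l ∈ univ.erase j, b l = 0 := by
    rw [← add_eq_right (b := b j), sum_erase_add _ _ (mem_univ j), hb.2, hj]
  exact (sum_eq_zero_iff_of_nonneg fun l _ => hb.1 l).1 hrest k
    (mem_erase.2 ⟨hkj, mem_univ k⟩)

theorem apply_eq_one_of_apply_eq_one {p b : ι → ℝ} (hp : p ∈ stdSimplex ℝ ι)
    (hb : b ∈ stdSimplex ℝ ι) (hpb : ∀ j, p j ≠ 0 → b j ≠ 0) {j : ι} (hj : b j = 1) :
    p j = 1 := by
  rw [← hp.2, sum_eq_single_of_mem j (mem_univ j)]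
  exact fun k _ hkj => by_contra fun h => hpb k h (apply_eq_zero_of_apply_eq_one hb hj hkj)

theorem sum_sq_div_one_sub_segment_le {p b : ι → ℝ} (hp : p ∈ stdSimplex ℝ ι)
    (hb : b ∈ stdSimplex ℝ ι) {t : ℝ} (ht : t ∈ Set.Ioo 0 1) :
    ∑ j, (b j - p j) ^ 2 / ((1 - t) * (1 - p j) + t * (1 - b j)) ≤
      ∑ j, (b j - p j) ^ 2 / ((1 - t) * p j + t * b j) := by
  have ht0 := ht.1
  have ht1 := sub_pos.2 ht.2
  have hsegment : (fun j => (1 - t) * p j + t * b j) ∈ stdSimplex ℝ ι :=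
    convex_stdSimplex ℝ ι hp hb ht1.le ht0.le (sub_add_cancel 1 t)
  have hv : ∑ j, (b j - p j) = 0 := by rw [sum_sub_distrib, hb.2, hp.2, sub_self]
  refine (sum_congr rfl fun j _ => ?_).trans_le (sum_sq_div_one_sub_le hsegment hv fun j hj => ?_)
  · congr 1
    ring
  · have h := (add_eq_zero_iff_of_nonneg (mul_nonneg ht1.le (hp.1 j))
      (mul_nonneg ht0.le (hb.1 j))).1 hj
    rw [(mul_eq_zero_iff_left ht1.ne').1 h.1, (mul_eq_zero_iff_left ht0.ne').1 h.2, sub_zero]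

theorem sum_negMulLog_sub_negMulLog_one_sub_le {p b : ι → ℝ} (hp : p ∈ stdSimplex ℝ ι)
    (hb : b ∈ stdSimplex ℝ ι) (hpb : ∀ j, p j ≠ 0 → b j ≠ 0) :
    ∑ j, (negMulLog (p j) - negMulLog (1 - p j)) ≤
      ∑ j, ((1 - p j) * log (1 - b j) - p j * log (b j)) := by
  have hp1 (j : ι) : 0 ≤ 1 - p j := sub_nonneg.2 (mem_Icc_of_mem_stdSimplex hp j).2
  have hb1 (j : ι) : 0 ≤ 1 - b j := sub_nonneg.2 (mem_Icc_of_mem_stdSimplex hb j).2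
  have hpb1 (j : ι) (h : 1 - p j ≠ 0) : 1 - b j ≠ 0 := fun h' =>
    h (sub_eq_zero.2 (apply_eq_one_of_apply_eq_one hp hb hpb (sub_eq_zero.1 h').symm).symm)
  have hmono : MonotoneOn (fun t => ∑ j,
      ((1 - p j) * log ((1 - t) * (1 - p j) + t * (1 - b j))
        - p j * log ((1 - t) * p j + t * b j))) (Set.Icc 0 1) := by
    refine monotoneOn_of_hasDerivWithinAt_nonneg (convex_Icc 0 1)
      (continuousOn_finsetSum _ fun j _ =>
        (continuousOn_mul_log_segment (hp1 j) (hb1 j) (hpb1 j)).sub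
          (continuousOn_mul_log_segment (hp.1 j) (hb.1 j) (hpb j)))
      (fun t ht => (HasDerivAt.fun_sum fun j _ =>
        (hasDerivAt_mul_log_segment (hp1 j) (hb1 j) (hpb1 j) (interior_Icc.subset ht)).sub
          (hasDerivAt_mul_log_segment (hp.1 j) (hb.1 j) (hpb j)
            (interior_Icc.subset ht))).hasDerivWithinAt) fun t ht => ?_
    rw [interior_Icc] at ht
    have hsq (j : ι) : (1 - b j - (1 - p j)) ^ 2 = (b j - p j) ^ 2 := by ring
    have hquad := mul_le_mul_of_nonneg_left (sum_sq_div_one_sub_segment_le hp hb ht) ht.1.le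
    simp only [hsq, sum_sub_distrib, ← mul_sum, hp.2, hb.2]
    linarith
  have h := hmono (Set.left_mem_Icc.2 zero_le_one) (Set.right_mem_Icc.2 zero_le_one) zero_le_one
  simp only [sub_zero, zero_mul, add_zero, one_mul, sub_self, zero_add] at h
  refine (sum_congr rfl fun j _ => ?_).trans_le h
  simp only [negMulLog]
  ring

theorem sum_negMulLog_sub_add_sum_mul_log_le {p b : ι → ℝ} (hp : p ∈ stdSimplex ℝ ι)
    (hb : b ∈ stdSimplex ℝ ι) (hpb : ∀ j, p j ≠ 0 → b j * (1 - b j) ≠ 0) :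
    ∑ k, (negMulLog (p k) - negMulLog (1 - p k)) + ∑ k, p k * log (b k * (1 - b k)) ≤
      ∑ k, log (1 - b k) := by
  have hbethe := sum_negMulLog_sub_negMulLog_one_sub_le hp hb fun j h =>
    left_ne_zero_of_mul (hpb j h)
  have hsplit (k : ι) : log (1 - b k) = (1 - p k) * log (1 - b k) - p k * log (b k) +
      p k * log (b k * (1 - b k)) := by
    rcases eq_or_ne (p k) 0 with h | h
    · simp [h]
    · rw [log_mul (left_ne_zero_of_mul (hpb k h)) (right_ne_zero_of_mul (hpb k h))]
      ring
  rw [sum_congr rfl fun k _ => hsplit k, sum_add_distrib]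
  gcongr

end BetheEntropy

section Entropy

open Real Finset

variable {ι : Type*} [Fintype ι]

theorem sum_negMulLog_le_neg_sum_mul_log {μ ν : ι → ℝ} (hμ : μ ∈ stdSimplex ℝ ι)
    (hν : ∀ x, 0 ≤ ν x) (hν1 : ∑ x, ν x ≤ 1) (hμν : ∀ x, μ x ≠ 0 → ν x ≠ 0) :
    ∑ x, negMulLog (μ x) ≤ -∑ x, μ x * log (ν x) := by
  have hterm (x : ι) : negMulLog (μ x) + μ x * log (ν x) ≤ ν x - μ x := by
    rcases eq_or_ne (μ x) 0 with h | h
    · simpa [h] using hν x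
    · have hlog := mul_le_mul_of_nonneg_left (log_le_sub_one_of_pos
        (div_pos ((hν x).lt_of_ne' (hμν x h)) ((hμ.1 x).lt_of_ne' h))) (hμ.1 x)
      rw [log_div (hμν x h) h, mul_sub_one, mul_div_cancel₀ _ h] at hlog
      rw [negMulLog]
      linarith
  have hsum := sum_le_sum fun x (_ : x ∈ univ) => hterm x
  rw [sum_add_distrib, sum_sub_distrib, hμ.2] at hsum
  linarith

theorem log_sum_eq_sum_negMulLog_add {w : ι → ℝ} (hw : ∑ x, w x ≠ 0) :
    log (∑ x, w x) = ∑ x, negMulLog (w x / ∑ y, w y) + ∑ x, w x / (∑ y, w y) * log (w x) := by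
  have hterm (x : ι) : negMulLog (w x / ∑ y, w y) + w x / (∑ y, w y) * log (w x) =
      w x / (∑ y, w y) * log (∑ y, w y) := by
    rcases eq_or_ne (w x) 0 with h | h
    · simp [h]
    · rw [negMulLog, log_div h hw]
      ring
  rw [← sum_add_distrib, sum_congr rfl fun x _ => hterm x, ← sum_mul, ← sum_div, div_self hw,
    one_mul]

end Entropy

section RandomPermutation

open Real Finset

variable {ι α : Type*} [LinearOrder α]

/-- The probability that the values of the permutation `σ` on `R` are drawn when the positions are
exposed in increasing order of `e`, the value at `i` being drawn among the values of `σ` not yet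
used with probability proportional to `P i`. -/
def exposureMass (P : Matrix ι ι ℝ) (e : ι → α) (R : Finset ι) (σ : Equiv.Perm ι) : ℝ :=
  ∏ i ∈ R, P i (σ i) / ∑ j ∈ R with e i ≤ e j, P i (σ j)

theorem exposureMass_nonneg {P : Matrix ι ι ℝ} (hP : ∀ i j, 0 ≤ P i j) (e : ι → α) (R : Finset ι)
    (σ : Equiv.Perm ι) : 0 ≤ exposureMass P e R σ :=
  prod_nonneg fun _ _ => div_nonneg (hP _ _) (sum_nonneg fun _ _ => hP _ _)

variable [DecidableEq ι]

theorem exposureMass_insert (P : Matrix ι ι ℝ) {e : ι → α} {a : ι} {R : Finset ι}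
    (ha : ∀ i ∈ R, e a < e i) (σ : Equiv.Perm ι) :
    exposureMass P e (insert a R) σ =
      P a (σ a) / (∑ j ∈ (insert a R).image σ, P a j) * exposureMass P e R σ := by
  have hfirst : (insert a R).filter (fun j => e a ≤ e j) = insert a R :=
    filter_true_of_mem (forall_mem_insert _ _ _ |>.2 ⟨le_rfl, fun i hi => (ha i hi).le⟩)
  rw [exposureMass, prod_insert fun h => (ha a h).false, hfirst, sum_image σ.injective.injOn]
  congr 1
  exact prod_congr rfl fun i hi => by rw [filter_insert, if_neg (ha i hi).not_ge]

variable [Fintype ι]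

theorem sum_exposureMass_le_one {P : Matrix ι ι ℝ} (hP : ∀ i j, 0 ≤ P i j) {e : ι → α}
    (he : Function.Injective e) (R : Finset ι) (τ : Equiv.Perm ι) :
    ∑ σ ∈ permsAgreeingOff R τ, exposureMass P e R σ ≤ 1 := by
  induction R using Finset.induction_on_min_value e generalizing τ with
  | empty => simp [permsAgreeingOff_empty, exposureMass]
  | insert a R ha hmin ih =>
    have hlt (i : ι) (hi : i ∈ R) : e a < e i :=
      (hmin i hi).lt_of_ne fun h => ha (he h ▸ hi)
    rw [sum_permsAgreeingOff_insert _ ha]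
    set C := ∑ j ∈ (insert a R).image τ, P a j
    calc
      _ = ∑ j ∈ (insert a R).image τ, P a j / C *
          ∑ σ ∈ permsAgreeingOff R (Equiv.swap (τ a) j * τ), exposureMass P e R σ := by
        refine sum_congr rfl fun j hj => ?_
        rw [← filter_permsAgreeingOff_insert ha hj, mul_sum]
        refine sum_congr rfl fun σ hσ => ?_
        obtain ⟨hστ, hσa⟩ := mem_filter.1 hσ
        rw [exposureMass_insert P hlt, image_eq_of_mem_permsAgreeingOff hστ, hσa]
      _ ≤ ∑ j ∈ (insert a R).image τ, P a j / C := sum_le_sum fun j _ =>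
        mul_le_of_le_one_right (div_nonneg (hP a j) (sum_nonneg fun k _ => hP a k)) (ih _)
      _ ≤ 1 := by
        rw [← sum_div]
        exact div_self_le_one C

/-- The distribution of the value at `i` of a random permutation with law `μ`, as the `i`-th row of
a matrix. -/
def permMarginal (μ : Equiv.Perm ι → ℝ) : Matrix ι ι ℝ :=
  fun i j => ∑ σ with σ i = j, μ σ

theorem sum_mul_apply_eq_sum_permMarginal_mul (μ : Equiv.Perm ι → ℝ) (i : ι) (f : ι → ℝ) :
    ∑ σ, μ σ * f (σ i) = ∑ k, permMarginal μ i k * f k := by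
  rw [← sum_fiberwise univ fun σ : Equiv.Perm ι => σ i]
  refine sum_congr rfl fun k _ => ?_
  rw [permMarginal, sum_mul]
  exact sum_congr rfl fun σ hσ => by rw [(mem_filter.1 hσ).2]

variable {μ : Equiv.Perm ι → ℝ} (hμ : μ ∈ stdSimplex ℝ (Equiv.Perm ι))
include hμ

theorem permMarginal_mem_stdSimplex (i : ι) : permMarginal μ i ∈ stdSimplex ℝ ι :=
  ⟨fun _ => sum_nonneg fun σ _ => hμ.1 σ, by
    simpa only [mul_one, hμ.2, eq_comm] using sum_mul_apply_eq_sum_permMarginal_mul μ i fun _ => 1⟩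

theorem permMarginal_apply_pos {σ : Equiv.Perm ι} (hσ : μ σ ≠ 0) (i : ι) :
    0 < permMarginal μ i (σ i) :=
  ((hμ.1 σ).lt_of_ne' hσ).trans_le
    (single_le_sum (fun ρ _ => hμ.1 ρ) (mem_filter.2 ⟨mem_univ σ, rfl⟩))

theorem sum_permMarginal_pos (e : ι → α) {σ : Equiv.Perm ι} (hσ : μ σ ≠ 0) (i : ι) :
    0 < ∑ j with e i ≤ e j, permMarginal μ i (σ j) :=
  (permMarginal_apply_pos hμ hσ i).trans_le
    (single_le_sum (f := fun j => permMarginal μ i (σ j))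
      (fun j _ => (permMarginal_mem_stdSimplex hμ i).1 (σ j)) (by simp))

theorem sum_negMulLog_le_of_injective {e : ι → α} (he : Function.Injective e) :
    ∑ σ, negMulLog (μ σ) ≤ ∑ i, (∑ k, negMulLog (permMarginal μ i k) +
      ∑ σ, μ σ * log (∑ j with e i ≤ e j, permMarginal μ i (σ j))) := by
  have hnonneg (i j : ι) := (permMarginal_mem_stdSimplex hμ i).1 j
  have hfactor (σ : Equiv.Perm ι) (hσ : μ σ ≠ 0) (i : ι) (_ : i ∈ univ) :
      permMarginal μ i (σ i) / ∑ j with e i ≤ e j, permMarginal μ i (σ j) ≠ 0 :=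
    (div_pos (permMarginal_apply_pos hμ hσ i) (sum_permMarginal_pos hμ e hσ i)).ne'
  have hgibbs := sum_negMulLog_le_neg_sum_mul_log hμ
    (exposureMass_nonneg hnonneg e univ)
    (by simpa only [permsAgreeingOff_univ] using sum_exposureMass_le_one hnonneg he univ 1)
    (fun σ hσ => prod_ne_zero_iff.2 (hfactor σ hσ))
  have hlog (σ : Equiv.Perm ι) : -(μ σ * log (exposureMass (permMarginal μ) e univ σ)) =
      ∑ i, (μ σ * -log (permMarginal μ i (σ i)) +
        μ σ * log (∑ j with e i ≤ e j, permMarginal μ i (σ j))) := by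
    rcases eq_or_ne (μ σ) 0 with h | h
    · simp [h]
    · rw [exposureMass, log_prod (hfactor σ h), mul_sum, ← sum_neg_distrib]
      refine sum_congr rfl fun i _ => ?_
      rw [log_div (permMarginal_apply_pos hμ h i).ne' (sum_permMarginal_pos hμ e h i).ne']
      ring
  rw [← sum_neg_distrib, sum_congr rfl fun σ _ => hlog σ, sum_comm] at hgibbs
  refine hgibbs.trans_eq (sum_congr rfl fun i _ => ?_)
  rw [sum_add_distrib,
    sum_mul_apply_eq_sum_permMarginal_mul μ i fun k => -log (permMarginal μ i k)]
  simp only [negMulLog, neg_mul, mul_neg]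

omit hμ

theorem expect_log_sum_filter_le_rev (p : ι → ℝ) (k : ι) :
    𝔼 e : ι ≃ Fin (Fintype.card ι), log (∑ j with e j ≤ e k, p j) =
      𝔼 e : ι ≃ Fin (Fintype.card ι), log (∑ j with e k ≤ e j, p j) :=
  Fintype.expect_equiv (Equiv.equivCongr (Equiv.refl ι) Fin.revPerm) _ _ fun e => by simp

theorem expect_log_sum_filter_le_comp (p : ι → ℝ) (σ : Equiv.Perm ι) (i : ι) :
    𝔼 e : ι ≃ Fin (Fintype.card ι), log (∑ j with e i ≤ e j, p (σ j)) =
      𝔼 e : ι ≃ Fin (Fintype.card ι), log (∑ j with e (σ i) ≤ e j, p j) :=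
  Fintype.expect_equiv (Equiv.equivCongr σ (Equiv.refl _)) _ _ fun e => by
    congr 1
    simp only [sum_filter]
    exact Fintype.sum_equiv σ _ _ fun j => by simp

theorem sum_mul_expect_log_le {p : ι → ℝ} (hp : p ∈ stdSimplex ℝ ι) :
    ∑ k, p k * 𝔼 e : ι ≃ Fin (Fintype.card ι), log (∑ j with e k ≤ e j, p j) ≤
      log 2 / 2 - ∑ k, negMulLog (1 - p k) := by
  have : Nonempty (ι ≃ Fin (Fintype.card ι)) := ⟨Fintype.equivFin ι⟩
  have h := expect_le univ_nonempty fun (e : ι ≃ Fin (Fintype.card ι)) _ =>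
    sum_mul_log_add_log_le hp e.injective
  simp only [expect_sum_comm, ← mul_expect, expect_add_distrib, expect_log_sum_filter_le_rev,
    ← two_mul, mul_left_comm _ (2 : ℝ), ← mul_sum] at h
  linarith

theorem sum_negMulLog_le_sum_permMarginal (hμ : μ ∈ stdSimplex ℝ (Equiv.Perm ι)) :
    ∑ σ, negMulLog (μ σ) ≤ ∑ i, (log 2 / 2 +
      ∑ k, (negMulLog (permMarginal μ i k) - negMulLog (1 - permMarginal μ i k))) := by
  have : Nonempty (ι ≃ Fin (Fintype.card ι)) := ⟨Fintype.equivFin ι⟩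
  have h := le_expect univ_nonempty fun (e : ι ≃ Fin (Fintype.card ι)) _ =>
    sum_negMulLog_le_of_injective hμ e.injective
  simp only [expect_sum_comm, expect_add_distrib, Fintype.expect_const, ← mul_expect,
    expect_log_sum_filter_le_comp] at h
  refine h.trans (sum_le_sum fun i _ => ?_)
  rw [sum_mul_apply_eq_sum_permMarginal_mul μ i fun k =>
    𝔼 e : ι ≃ Fin (Fintype.card ι), log (∑ j with e k ≤ e j, permMarginal μ i j), sum_sub_distrib]
  linarith [sum_mul_expect_log_le (permMarginal_mem_stdSimplex hμ i)]

end RandomPermutation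

section UpperBound

open Real Finset

variable {ι : Type*} [Fintype ι] [DecidableEq ι]

/-- The matrix `P` consists of the marginals of the random permutation whose law is proportional to
`σ ↦ ∏ i, A i (σ i)`. -/
theorem exists_log_permanent_le {A : Matrix ι ι ℝ} (hA : ∀ i j, 0 ≤ A i j)
    (hperm : A.permanent ≠ 0) :
    ∃ P : Matrix ι ι ℝ, (∀ i, P i ∈ stdSimplex ℝ ι) ∧ (∀ i j, P i j ≠ 0 → A i j ≠ 0) ∧
      log A.permanent ≤ ∑ i, (log 2 / 2 + ∑ k, (negMulLog (P i k) - negMulLog (1 - P i k)) +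
        ∑ k, P i k * log (A i k)) := by
  rw [permanent_eq_sum_prod_apply] at hperm ⊢
  set w : Equiv.Perm ι → ℝ := fun σ => ∏ i, A i (σ i) with hw
  set μ : Equiv.Perm ι → ℝ := fun σ => w σ / ∑ ρ, w ρ
  have hw0 (σ : Equiv.Perm ι) : 0 ≤ w σ := prod_nonneg fun i _ => hA i (σ i)
  have hμ : μ ∈ stdSimplex ℝ (Equiv.Perm ι) :=
    ⟨fun σ => div_nonneg (hw0 σ) (sum_nonneg fun ρ _ => hw0 ρ), by
      rw [← sum_div, div_self hperm]⟩
  have hsupp (σ : Equiv.Perm ι) (h : μ σ ≠ 0) (i : ι) : A i (σ i) ≠ 0 :=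
    prod_ne_zero_iff.1 (div_ne_zero_iff.1 h).1 i (mem_univ i)
  refine ⟨permMarginal μ, permMarginal_mem_stdSimplex hμ, fun i j hij => ?_, ?_⟩
  · obtain ⟨σ, hσ, hne⟩ := exists_ne_zero_of_sum_ne_zero hij
    exact (mem_filter.1 hσ).2 ▸ hsupp σ hne i
  · have henergy : ∑ σ, μ σ * log (w σ) = ∑ i, ∑ k, permMarginal μ i k * log (A i k) := by
      simp only [← sum_mul_apply_eq_sum_permMarginal_mul μ _ fun k => log (A _ k)]
      rw [sum_comm]
      refine sum_congr rfl fun σ _ => ?_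
      rcases eq_or_ne (μ σ) 0 with h | h
      · simp [h]
      · rw [← mul_sum, hw, log_prod fun i _ => hsupp σ h i]
    rw [log_sum_eq_sum_negMulLog_add hperm, henergy, sum_add_distrib]
    gcongr
    exact sum_negMulLog_le_sum_permMarginal hμ

theorem permanent_map_mul_one_sub_eq_zero {B : Matrix ι ι ℝ} {i j : ι}
    (hBi : B i ∈ stdSimplex ℝ ι) (hij : B i j = 1) :
    (B.map fun x => x * (1 - x)).permanent = 0 := by
  have hrow (k : ι) : B i k * (1 - B i k) = 0 := by
    rcases eq_or_ne k j with rfl | hkj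
    · rw [hij, sub_self, mul_zero]
    · rw [apply_eq_zero_of_apply_eq_one hBi hij hkj, zero_mul]
  rw [permanent_eq_sum_prod_apply]
  exact sum_eq_zero fun σ _ => prod_eq_zero (mem_univ i) (hrow (σ i))

theorem permanent_map_mul_one_sub_le {B : Matrix ι ι ℝ} (hB : B ∈ Matrix.rowStochastic ℝ ι) :
    (B.map fun x => x * (1 - x)).permanent ≤
      (2 : ℝ) ^ ((Fintype.card ι : ℝ) / 2) * ∏ i, ∏ j, (1 - B i j) := by
  have hrow (i : ι) : B i ∈ stdSimplex ℝ ι :=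
    ⟨fun _ => hB.1 _ _, Matrix.sum_row_of_mem_rowStochastic hB i⟩
  have hle (i j : ι) : 0 ≤ 1 - B i j := sub_nonneg.2 (Matrix.le_one_of_mem_rowStochastic hB)
  rcases le_or_gt (B.map fun x => x * (1 - x)).permanent 0 with hperm | hperm
  · exact hperm.trans (mul_nonneg (by positivity)
      (prod_nonneg fun i _ => prod_nonneg fun j _ => hle i j))
  have hpos (i j : ι) : 0 < 1 - B i j := (hle i j).lt_of_ne' fun h =>
    hperm.ne' (permanent_map_mul_one_sub_eq_zero (hrow i) (sub_eq_zero.1 h).symm)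
  have hprod (i : ι) : 0 < ∏ j, (1 - B i j) := prod_pos fun j _ => hpos i j
  obtain ⟨P, hP, hPB, hlog⟩ := exists_log_permanent_le
    (A := B.map fun x => x * (1 - x)) (fun i j => mul_nonneg (hB.1 i j) (hle i j)) hperm.ne'
  rw [← log_le_log_iff hperm (mul_pos (by positivity) (prod_pos fun i _ => hprod i))]
  calc
    _ ≤ ∑ i, (log 2 / 2 + ∑ j, log (1 - B i j)) := hlog.trans <| sum_le_sum fun i _ => by
      rw [add_assoc]
      gcongr
      exact sum_negMulLog_sub_add_sum_mul_log_le (hP i) (hrow i) (hPB i)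
    _ = log ((2 : ℝ) ^ ((Fintype.card ι : ℝ) / 2)) + log (∏ i, ∏ j, (1 - B i j)) := by
      rw [log_rpow two_pos, log_prod fun i _ => (hprod i).ne', sum_add_distrib, sum_const,
        card_univ, nsmul_eq_mul, mul_div_left_comm, mul_comm (log 2)]
      simp only [log_prod fun j _ => (hpos _ j).ne']
    _ = log ((2 : ℝ) ^ ((Fintype.card ι : ℝ) / 2) * ∏ i, ∏ j, (1 - B i j)) :=
      (log_mul (by positivity) (prod_pos fun i _ => hprod i).ne').symm

end UpperBound

theorem statement_10_general {ι : Type*} [Fintype ι] [DecidableEq ι] {B : Matrix ι ι ℝ}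
    (hB : B ∈ doublyStochastic ℝ ι) :
    ∏ i, ∏ j, (1 - B i j) ≤ (B.map fun x => x * (1 - x)).permanent ∧
      (B.map fun x => x * (1 - x)).permanent ≤
        (2 : ℝ) ^ ((Fintype.card ι : ℝ) / 2) * ∏ i, ∏ j, (1 - B i j) :=
  ⟨prod_one_sub_le_permanent hB, permanent_map_mul_one_sub_le
    (mem_doublyStochastic_iff_mem_rowStochastic_and_mem_colStochastic.1 hB).1⟩

/-- For `r ≥ 1` and an `r×r` doubly stochastic real matrix `B` all of whose
entries are `< 1`:
`∏_{i,j} (1 − B(i,j)) ≤ Σ_{σ∈S_r} ∏_i B(i,σ(i))·(1 − B(i,σ(i))) ≤ 2^{r/2} · ∏_{i,j} (1 − B(i,j))`. -/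
theorem statement_10 (r : ℕ) (hr : 1 ≤ r) (B : Matrix (Fin r) (Fin r) ℝ)
    (hB0 : ∀ i j, 0 ≤ B i j) (hrow : ∀ i, ∑ j, B i j = 1) (hcol : ∀ j, ∑ i, B i j = 1)
    (hlt : ∀ i j, B i j < 1) :
    (∏ i, ∏ j, (1 - B i j)) ≤
        (∑ σ : Equiv.Perm (Fin r), ∏ i, B i (σ i) * (1 - B i (σ i))) ∧
      (∑ σ : Equiv.Perm (Fin r), ∏ i, B i (σ i) * (1 - B i (σ i))) ≤
        (2 : ℝ) ^ ((r : ℝ) / 2) * ∏ i, ∏ j, (1 - B i j) := by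
  simpa only [permanent_eq_sum_prod_apply, Matrix.map_apply, Fintype.card_fin] using
    statement_10_general (mem_doublyStochastic_iff_sum.2 ⟨hB0, hrow, hcol⟩)
end
end

section
/- Fix integers n, N ≥ 1 and k ∈ K(N,n), and let γ be the doubly stochastic matrix with entries γ(i,j) = k(i,j)/N. Then lim_{t→∞} log(C_{tN,n}(t·k)) / (tN) = H'_G(γ), where t ranges over positive integers, t·k is the entrywise multiple (so t·k ∈ K(tN,n)), and H'_G(γ) is the supremum of the Shannon entropies −Σ_{σ∈S_n} p(σ)·log p(σ) over all probability distributions p on S_n satisfying Σ_{σ∈S_n} p(σ)·P_σ = γ (such p exist by the Birkhoff–von Neumann theorem; convention 0·log 0 = 0; log denotes the natural logarithm). -/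
open scoped BigOperators

noncomputable section

/-- The permutation matrix `P_σ` with entries `P_σ(i,j) = 1` iff `σ(i) = j`. -/
def permMat {n : ℕ} (σ : Equiv.Perm (Fin n)) : Matrix (Fin n) (Fin n) ℕ :=
  Matrix.of fun i j => if σ i = j then 1 else 0

/-- `k ∈ K(M,n)`: a nonnegative-integer `n×n` matrix all of whose row sums and
column sums equal `M`. -/
def isDS (M n : ℕ) (k : Matrix (Fin n) (Fin n) ℕ) : Prop :=
  (∀ i, ∑ j, k i j = M) ∧ (∀ j, ∑ i, k i j = M)

/-- `C_{M,n}(k)`: the number of `M`-tuples `(σ_1,…,σ_M)` of permutations of `{1,…,n}`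
with `Σ_m P_{σ_m} = k`. -/
def Ccoef (M n : ℕ) (k : Matrix (Fin n) (Fin n) ℕ) : ℕ :=
  Nat.card {σs : Fin M → Equiv.Perm (Fin n) // (∑ m, permMat (σs m)) = k}

/-!
Regard the tuples counted by `Ccoef M n k` as words of length `M` over the alphabet `S_n`, and let
`k = M • γ`.

Upper bound: a uniformly random such word has entropy `log (Ccoef M n k)`, which by subadditivity is
at most `M` times the entropy of its mean letter distribution. Every word has mean permutation
matrix `γ`, so this distribution decomposes `γ`, and `log (Ccoef M n k) ≤ M * H'_G(γ)` holds for
every `M`, with no error term.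

Lower bound: given a decomposition `p` of `γ`, subtracting `⌊M * p σ⌋` copies of each `P_σ` from `k`
leaves a natural matrix with constant line sums, which is again a sum of permutation matrices. This
gives letter counts `c` with `c σ / M → p σ` and `∑ σ, c σ • P_σ = k`, so `Ccoef M n k` is at least
the multinomial coefficient of `c`. That coefficient is `exp (M * H(c / M))` up to a factor
polynomial in `M`, because it belongs to the largest of the polynomially many terms in the
multinomial expansion of `(∑ σ, c σ) ^ M`.
-/

open Finset Filter Topology

section Multinomial

variable {ι : Type*} (s : Finset ι)

theorem pow_mul_factorial_le_pow_self_mul_factorial (a b : ℕ) :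
    a ^ b * a.factorial ≤ a ^ a * b.factorial := by
  rcases le_total a b with hab | hba
  · calc a ^ b * a.factorial = a ^ a * (a.factorial * a ^ (b - a)) := by
          rw [mul_left_comm, ← pow_add, Nat.add_sub_cancel' hab, mul_comm]
      _ ≤ a ^ a * b.factorial := by gcongr; exact Nat.factorial_mul_pow_sub_le_factorial hab
  · calc a ^ b * a.factorial = a ^ b * (b.factorial * a.descFactorial (a - b)) := by
          rw [← Nat.factorial_mul_descFactorial (Nat.sub_le a b), Nat.sub_sub_self hba]
      _ ≤ a ^ b * (b.factorial * a ^ (a - b)) := by gcongr; exact a.descFactorial_le_pow _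
      _ = a ^ a * b.factorial := by
          rw [mul_left_comm, ← pow_add, Nat.add_sub_cancel' hba, mul_comm]

theorem multinomial_mul_prod_pow_le_multinomial_mul_prod_pow_self {c d : ι → ℕ}
    (hcd : ∑ i ∈ s, d i = ∑ i ∈ s, c i) :
    Nat.multinomial s d * ∏ i ∈ s, c i ^ d i ≤ Nat.multinomial s c * ∏ i ∈ s, c i ^ c i := by
  have hpos : 0 < (∏ i ∈ s, (d i).factorial) * ∏ i ∈ s, (c i).factorial := by positivity
  refine Nat.le_of_mul_le_mul_left ?_ hpos
  calc (∏ i ∈ s, (d i).factorial) * (∏ i ∈ s, (c i).factorial) *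
        (Nat.multinomial s d * ∏ i ∈ s, c i ^ d i)
      = (∑ i ∈ s, c i).factorial * ∏ i ∈ s, c i ^ d i * (c i).factorial := by
        rw [← hcd, ← Nat.multinomial_spec, prod_mul_distrib]; ring
    _ ≤ (∑ i ∈ s, c i).factorial * ∏ i ∈ s, c i ^ c i * (d i).factorial :=
        Nat.mul_le_mul_left _ <| prod_le_prod' fun i _ =>
          pow_mul_factorial_le_pow_self_mul_factorial (c i) (d i)
    _ = (∏ i ∈ s, (d i).factorial) * (∏ i ∈ s, (c i).factorial) *
        (Nat.multinomial s c * ∏ i ∈ s, c i ^ c i) := by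
        rw [← Nat.multinomial_spec, prod_mul_distrib]; ring

theorem multinomial_mul_prod_pow_self_le (c : ι → ℕ) :
    Nat.multinomial s c * ∏ i ∈ s, c i ^ c i ≤ (∑ i ∈ s, c i) ^ ∑ i ∈ s, c i := by
  classical
  have hind : ∀ i ∈ s, (s : Set ι).indicator c i = c i := fun i hi => by simp [hi]
  rw [sum_pow_eq_sum_piAntidiag, ← Nat.multinomial_congr hind,
    ← prod_congr rfl fun i hi => congrArg (c i ^ ·) (hind i hi)]
  refine single_le_sum (f := fun d => Nat.multinomial s d * ∏ i ∈ s, c i ^ d i)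
    (fun _ _ => Nat.zero_le _) (mem_piAntidiag.2 ⟨sum_congr rfl hind, fun i hi => ?_⟩)
  exact mem_coe.1 (Set.mem_of_indicator_ne_zero hi)

theorem card_piAntidiag_le [DecidableEq ι] (M : ℕ) : #(piAntidiag s M) ≤ (M + 1) ^ #s := by
  refine (card_le_card_of_injOn (t := s.pi fun _ => range (M + 1)) (fun d i _ => d i)
    (fun d hd => ?_) fun d hd e he hde => funext fun i => ?_).trans_eq (by simp [card_pi])
  · rw [mem_coe, mem_piAntidiag] at hd
    refine mem_coe.2 <| mem_pi.2 fun i hi => mem_range_succ_iff.2 ?_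
    exact (single_le_sum (fun _ _ => Nat.zero_le _) hi).trans_eq hd.1
  · rw [mem_coe, mem_piAntidiag] at hd he
    by_cases hi : i ∈ s
    · exact congrFun₂ hde i hi
    · rw [not_imp_comm.1 (hd.2 i) hi, not_imp_comm.1 (he.2 i) hi]

theorem sum_pow_sum_le (c : ι → ℕ) :
    (∑ i ∈ s, c i) ^ ∑ i ∈ s, c i ≤
      (∑ i ∈ s, c i + 1) ^ #s * (Nat.multinomial s c * ∏ i ∈ s, c i ^ c i) := by
  classical
  calc (∑ i ∈ s, c i) ^ ∑ i ∈ s, c i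
      = ∑ d ∈ piAntidiag s (∑ i ∈ s, c i), Nat.multinomial s d * ∏ i ∈ s, c i ^ d i :=
        sum_pow_eq_sum_piAntidiag ..
    _ ≤ #(piAntidiag s (∑ i ∈ s, c i)) • (Nat.multinomial s c * ∏ i ∈ s, c i ^ c i) :=
        sum_le_card_nsmul _ _ _ fun d hd =>
          multinomial_mul_prod_pow_le_multinomial_mul_prod_pow_self s (mem_piAntidiag.1 hd).1
    _ ≤ (∑ i ∈ s, c i + 1) ^ #s * (Nat.multinomial s c * ∏ i ∈ s, c i ^ c i) :=
        Nat.mul_le_mul_right _ (card_piAntidiag_le s _)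

end Multinomial

section Entropy

variable {ι : Type*} [Fintype ι]

/-- The Shannon entropy, in nats, of a weight function on a finite set. -/
def shannonEntropy (p : ι → ℝ) : ℝ :=
  ∑ i, Real.negMulLog (p i)

theorem continuous_shannonEntropy : Continuous (shannonEntropy : (ι → ℝ) → ℝ) := by
  unfold shannonEntropy
  fun_prop

theorem shannonEntropy_nonneg {p : ι → ℝ} (hp : p ∈ stdSimplex ℝ ι) : 0 ≤ shannonEntropy p :=
  sum_nonneg fun i _ => Real.negMulLog_nonneg (hp.1 i) (mem_Icc_of_mem_stdSimplex hp i).2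

/-- The relative frequencies of the counts `c`; these are all `0` when `c = 0`. -/
def relativeFrequency (c : ι → ℕ) (i : ι) : ℝ :=
  c i / (∑ j, c j : ℕ)

theorem relativeFrequency_nonneg (c : ι → ℕ) (i : ι) : 0 ≤ relativeFrequency c i := by
  unfold relativeFrequency
  positivity

theorem sum_relativeFrequency (c : ι → ℕ) :
    ∑ i, relativeFrequency c i = (∑ i, c i : ℕ) / (∑ i, c i : ℕ) := by
  simp only [relativeFrequency, ← sum_div, Nat.cast_sum]

theorem relativeFrequency_mem_stdSimplex {c : ι → ℕ} (hc : ∑ i, c i ≠ 0) :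
    relativeFrequency c ∈ stdSimplex ℝ ι :=
  ⟨relativeFrequency_nonneg c, by rw [sum_relativeFrequency, div_self (Nat.cast_ne_zero.2 hc)]⟩

theorem sum_mul_relativeFrequency (c : ι → ℕ) (i : ι) :
    (∑ j, c j : ℕ) * relativeFrequency c i = c i := by
  refine mul_div_cancel_of_imp' fun h => ?_
  exact Nat.cast_eq_zero.2 (sum_eq_zero_iff.1 (Nat.cast_eq_zero.1 h) i (mem_univ i))

theorem sum_mul_shannonEntropy_relativeFrequency (c : ι → ℕ) :
    (∑ i, c i : ℕ) * shannonEntropy (relativeFrequency c) =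
      -∑ i, c i * Real.log (relativeFrequency c i) := by
  simp only [shannonEntropy, Real.negMulLog, neg_mul, sum_neg_distrib, mul_neg, mul_sum,
    ← mul_assoc, sum_mul_relativeFrequency]

theorem sum_mul_shannonEntropy_relativeFrequency_eq_log_sub_log (c : ι → ℕ) :
    (∑ i, c i : ℕ) * shannonEntropy (relativeFrequency c) =
      Real.log ((∑ i, c i) ^ ∑ i, c i : ℕ) - Real.log (∏ i, c i ^ c i : ℕ) := by
  have hterm (i : ι) : c i * Real.log (relativeFrequency c i) =
      c i * Real.log (c i) - c i * Real.log (∑ j, c j : ℕ) := by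
    rcases Nat.eq_zero_or_pos (c i) with hi | hi
    · simp [hi]
    have hsum : 0 < ∑ j, c j :=
      hi.trans_le (single_le_sum (fun _ _ => Nat.zero_le _) (mem_univ i))
    rw [relativeFrequency, Real.log_div (by positivity) (by positivity), mul_sub]
  rw [sum_mul_shannonEntropy_relativeFrequency, sum_congr rfl fun i _ => hterm i,
    sum_sub_distrib, ← sum_mul, neg_sub, Nat.cast_pow, Real.log_pow, Nat.cast_prod,
    Real.log_prod fun i _ => Nat.cast_ne_zero.2 Nat.pow_self_pos.ne', Nat.cast_sum]
  simp only [Nat.cast_pow, Real.log_pow]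

theorem log_multinomial_le (c : ι → ℕ) :
    Real.log (Nat.multinomial univ c) ≤
      (∑ i, c i : ℕ) * shannonEntropy (relativeFrequency c) := by
  have hprod : 0 < ∏ i, c i ^ c i := prod_pos fun _ _ => Nat.pow_self_pos
  have hmul := Nat.multinomial_pos univ c
  have h := Real.log_le_log (by positivity)
    (Nat.cast_le (α := ℝ).2 (multinomial_mul_prod_pow_self_le univ c))
  rw [Nat.cast_mul, Real.log_mul (by positivity) (by positivity)] at h
  rw [sum_mul_shannonEntropy_relativeFrequency_eq_log_sub_log]
  exact le_sub_iff_add_le.2 h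

theorem le_log_multinomial (c : ι → ℕ) :
    (∑ i, c i : ℕ) * shannonEntropy (relativeFrequency c) -
        Fintype.card ι * Real.log ((∑ i, c i : ℕ) + 1) ≤
      Real.log (Nat.multinomial univ c) := by
  have hprod : 0 < ∏ i, c i ^ c i := prod_pos fun _ _ => Nat.pow_self_pos
  have hmul := Nat.multinomial_pos univ c
  have h := Real.log_le_log (by exact_mod_cast Nat.pow_self_pos)
    (Nat.cast_le (α := ℝ).2 (sum_pow_sum_le univ c))
  rw [Nat.cast_mul, Nat.cast_mul, Real.log_mul (by positivity) (by positivity),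
    Real.log_mul (by positivity) (by positivity), Nat.cast_pow (_ + 1), Real.log_pow, card_univ,
    Nat.cast_succ] at h
  rw [sum_mul_shannonEntropy_relativeFrequency_eq_log_sub_log]
  linarith

theorem tendsto_log_add_one_div_atTop :
    Tendsto (fun M : ℕ => Real.log (M + 1) / M) atTop (𝓝 0) := by
  have h := (Real.tendsto_pow_log_div_mul_add_atTop 1 (-1) 1 one_ne_zero).comp
    (tendsto_atTop_add_const_right _ 1 (tendsto_natCast_atTop_atTop (R := ℝ)))
  simpa [Function.comp_def] using h

theorem tendsto_log_multinomial_div {α : Type*} {l : Filter α} {c : α → ι → ℕ} {p : ι → ℝ}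
    (hsum : Tendsto (fun a => ∑ i, c a i) l atTop)
    (hp : Tendsto (fun a => relativeFrequency (c a)) l (𝓝 p)) :
    Tendsto (fun a => Real.log (Nat.multinomial univ (c a)) / (∑ i, c a i : ℕ)) l
      (𝓝 (shannonEntropy p)) := by
  have hentropy := (continuous_shannonEntropy.tendsto p).comp hp
  have herror := (tendsto_log_add_one_div_atTop.comp hsum).const_mul (Fintype.card ι : ℝ)
  have hlower := hentropy.sub herror
  rw [mul_zero, sub_zero] at hlower
  have hpos : ∀ᶠ a in l, (0 : ℝ) < (∑ i, c a i : ℕ) :=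
    (hsum.eventually_gt_atTop 0).mono fun a ha => Nat.cast_pos.2 ha
  refine tendsto_of_tendsto_of_tendsto_of_le_of_le' hlower hentropy ?_ ?_
  · filter_upwards [hpos] with a ha
    rw [le_div_iff₀' ha, mul_sub, mul_left_comm]
    simpa only [Function.comp_apply, mul_div_cancel₀ _ ha.ne'] using le_log_multinomial (c a)
  · filter_upwards [hpos] with a ha
    exact (div_le_iff₀' ha).2 (log_multinomial_le (c a))

theorem tendsto_relativeFrequency_of_floor_le {α : Type*} {l : Filter α} {c : α → ι → ℕ}
    {p : ι → ℝ} (hp : p ∈ stdSimplex ℝ ι) (hsum : Tendsto (fun a => ∑ i, c a i) l atTop)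
    (hfloor : ∀ a i, ⌊p i * (∑ j, c a j : ℕ)⌋₊ ≤ c a i) :
    Tendsto (fun a => relativeFrequency (c a)) l (𝓝 p) := by
  classical
  have hlower (i : ι) : Tendsto
      (fun a => (⌊p i * (∑ j, c a j : ℕ)⌋₊ : ℝ) / (∑ j, c a j : ℕ)) l (𝓝 (p i)) :=
    (tendsto_nat_floor_mul_div_atTop (hp.1 i)).comp (tendsto_natCast_atTop_atTop.comp hsum)
  have hle (a : α) (i : ι) :
      (⌊p i * (∑ j, c a j : ℕ)⌋₊ : ℝ) / (∑ j, c a j : ℕ) ≤ relativeFrequency (c a) i :=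
    div_le_div_of_nonneg_right (Nat.cast_le.2 (hfloor a i)) (Nat.cast_nonneg _)
  refine tendsto_pi_nhds.2 fun i => ?_
  have hupper : Tendsto (fun a => 1 - ∑ j ∈ univ.erase i,
      (⌊p j * (∑ j, c a j : ℕ)⌋₊ : ℝ) / (∑ j, c a j : ℕ)) l (𝓝 (p i)) := by
    have hpi : p i = 1 - ∑ j ∈ univ.erase i, p j := by
      rw [← hp.2, ← add_sum_erase univ p (mem_univ i), add_sub_cancel_right]
    rw [hpi]
    exact (tendsto_finsetSum _ fun j _ => hlower j).const_sub 1
  refine tendsto_of_tendsto_of_tendsto_of_le_of_le (hlower i) hupper (fun a => hle a i) fun a => ?_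
  have hfreq : ∑ j, relativeFrequency (c a) j ≤ 1 :=
    (sum_relativeFrequency (c a)).trans_le (div_self_le_one _)
  rw [← add_sum_erase univ _ (mem_univ i)] at hfreq
  exact le_sub_iff_add_le.2 <|
    (add_le_add_right (sum_le_sum fun j _ => hle a j) _).trans hfreq

end Entropy

section Words

variable {ι : Type*} [DecidableEq ι] {M : ℕ}

/-- The number of occurrences of the letter `i` in the word `f`. -/
def letterCount (f : Fin M → ι) (i : ι) : ℕ :=
  #{m | f m = i}

/-- The number of occurrences of the letter `i` in all words of `W` together. -/
def totalLetterCount (W : Finset (Fin M → ι)) (i : ι) : ℕ :=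
  ∑ f ∈ W, letterCount f i

theorem totalLetterCount_pos {W : Finset (Fin M → ι)} {f : Fin M → ι} (hf : f ∈ W) (m : Fin M) :
    0 < totalLetterCount W (f m) :=
  sum_pos' (fun _ _ => Nat.zero_le _) ⟨f, hf, card_pos.2 ⟨m, by simp⟩⟩

variable [Fintype ι]

theorem sum_letterCount_smul {V : Type*} [AddCommMonoid V] (f : Fin M → ι) (g : ι → V) :
    ∑ i, letterCount f i • g i = ∑ m, g (f m) := by
  simp only [letterCount, ← sum_fiberwise' univ f g, sum_const]

theorem sum_letterCount (f : Fin M → ι) : ∑ i, letterCount f i = M := by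
  simpa only [smul_eq_mul, mul_one, sum_const, card_univ, Fintype.card_fin] using
    sum_letterCount_smul f fun _ => (1 : ℕ)

theorem sum_totalLetterCount_smul {V : Type*} [AddCommMonoid V] (W : Finset (Fin M → ι))
    (g : ι → V) : ∑ i, totalLetterCount W i • g i = ∑ f ∈ W, ∑ m, g (f m) := by
  simp only [totalLetterCount, sum_smul, ← sum_letterCount_smul]
  exact sum_comm

theorem sum_totalLetterCount (W : Finset (Fin M → ι)) : ∑ i, totalLetterCount W i = #W * M := by
  simp only [totalLetterCount, sum_comm (t := W), sum_letterCount, sum_const, smul_eq_mul]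

theorem card_letterCount_eq (c : ι → ℕ) :
    #{f : Fin (∑ i, c i) → ι | letterCount f = c} = Nat.multinomial univ c := by
  -- Both sides are the coefficient of `∏ i, X i ^ c i` in `(∑ i, X i) ^ M`.
  let d : ι →₀ ℕ := Finsupp.equivFunOnFinite.symm c
  have hmonomial (f : Fin (∑ i, c i) → ι) : ∏ m, (MvPolynomial.X (f m) : MvPolynomial ι ℕ) =
      MvPolynomial.monomial (Finsupp.equivFunOnFinite.symm (letterCount f)) 1 := by
    rw [MvPolynomial.monomial_eq, Finsupp.prod_fintype _ _ fun _ => pow_zero _]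
    simp [letterCount, ← prod_fiberwise' univ f]
  have hd : d.sum (fun _ m => m) = ∑ i, c i := Finsupp.sum_fintype d _ fun _ => rfl
  have hcoeff := MvPolynomial.coeff_sum_X_pow_of_fintype (R := ℕ) d (∑ i, c i)
  rw [if_pos hd, Fintype.sum_pow, MvPolynomial.coeff_sum,
    Finsupp.multinomial_eq_of_support_subset (subset_univ _)] at hcoeff
  simp only [hmonomial, MvPolynomial.coeff_monomial, d, EmbeddingLike.apply_eq_iff_eq] at hcoeff
  rw [card_filter]
  exact hcoeff

theorem card_mul_log_card_le_neg_sum_log {α : Type*} (W : Finset α) {q : α → ℝ}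
    (hq : ∀ x ∈ W, 0 < q x) (hsum : ∑ x ∈ W, q x ≤ 1) :
    #W * Real.log #W ≤ -∑ x ∈ W, Real.log (q x) := by
  have hlog : ∀ x ∈ W, Real.log #W + Real.log (q x) ≤ #W * q x - 1 := fun x hx => by
    have hcard : (0 : ℝ) < #W := Nat.cast_pos.2 (card_pos.2 ⟨x, hx⟩)
    rw [← Real.log_mul hcard.ne' (hq x hx).ne']
    exact Real.log_le_sub_one_of_pos (mul_pos hcard (hq x hx))
  have hle := sum_le_sum hlog
  rw [sum_add_distrib, sum_sub_distrib, ← mul_sum, sum_const, sum_const, nsmul_eq_mul,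
    nsmul_eq_mul, mul_one] at hle
  have hmul := mul_le_of_le_one_right (Nat.cast_nonneg (α := ℝ) #W) hsum
  linarith

theorem log_card_le_mul_shannonEntropy (W : Finset (Fin M → ι)) :
    Real.log #W ≤ M * shannonEntropy (relativeFrequency (totalLetterCount W)) := by
  set p := relativeFrequency (totalLetterCount W)
  rcases W.eq_empty_or_nonempty with rfl | hW
  · simp [shannonEntropy, p, totalLetterCount, relativeFrequency]
  have hp : ∀ f ∈ W, ∀ m, 0 < p (f m) := fun f hf m =>
    div_pos (Nat.cast_pos.2 (totalLetterCount_pos hf m)) <| Nat.cast_pos.2 <|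
      sum_pos' (fun _ _ => Nat.zero_le _) ⟨f m, mem_univ _, totalLetterCount_pos hf m⟩
  -- Gibbs' inequality is applied to the law of `M` independent letters distributed as `p`.
  have hsum : ∑ f ∈ W, ∏ m, p (f m) ≤ 1 :=
    calc ∑ f ∈ W, ∏ m, p (f m) ≤ ∑ f : Fin M → ι, ∏ m, p (f m) :=
          sum_le_univ_sum_of_nonneg fun f => prod_nonneg fun m _ => relativeFrequency_nonneg _ _
      _ = (∑ i, p i) ^ M := (Fintype.sum_pow p M).symm
      _ ≤ 1 := pow_le_one₀ (sum_nonneg fun i _ => relativeFrequency_nonneg _ i)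
          ((sum_relativeFrequency _).trans_le (div_self_le_one _))
  have hcross : -∑ f ∈ W, Real.log (∏ m, p (f m)) = #W * (M * shannonEntropy p) :=
    calc -∑ f ∈ W, Real.log (∏ m, p (f m)) = -∑ f ∈ W, ∑ m, Real.log (p (f m)) := by
          rw [sum_congr rfl fun f hf => Real.log_prod fun m _ => (hp f hf m).ne']
      _ = -∑ i, totalLetterCount W i * Real.log (p i) := by
          simp only [← sum_totalLetterCount_smul W fun i => Real.log (p i), nsmul_eq_mul]
      _ = #W * (M * shannonEntropy p) := by
          rw [← sum_mul_shannonEntropy_relativeFrequency, sum_totalLetterCount, Nat.cast_mul,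
            mul_assoc]
  have hgibbs :=
    card_mul_log_card_le_neg_sum_log W (fun f hf => prod_pos fun m _ => hp f hf m) hsum
  rw [hcross] at hgibbs
  exact le_of_mul_le_mul_left hgibbs (Nat.cast_pos.2 hW.card_pos)

end Words

section MaxEntropy

variable {ι V : Type*} [Fintype ι] [AddCommGroup V] [Module ℝ V]

/-- The probability distributions on `ι` under which the family `A` has mean `v`. -/
def weightsWithMean (A : ι → V) (v : V) : Set (ι → ℝ) :=
  {p ∈ stdSimplex ℝ ι | ∑ i, p i • A i = v}

/-- The largest Shannon entropy of a probability distribution under which `A` has mean `v`, with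
the junk value `0` if there is none. -/
def maxEntropy (A : ι → V) (v : V) : ℝ :=
  sSup (shannonEntropy '' weightsWithMean A v)

variable {A : ι → V} {v : V}

theorem shannonEntropy_le_maxEntropy {p : ι → ℝ} (hp : p ∈ weightsWithMean A v) :
    shannonEntropy p ≤ maxEntropy A v := by
  have hbdd : BddAbove (shannonEntropy '' stdSimplex ℝ ι) :=
    ((isCompact_stdSimplex ℝ ι).image continuous_shannonEntropy).bddAbove
  exact le_csSup (hbdd.mono (Set.image_mono fun _ hq => hq.1)) (Set.mem_image_of_mem _ hp)

theorem maxEntropy_nonneg : 0 ≤ maxEntropy A v :=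
  Real.sSup_nonneg <| Set.forall_mem_image.2 fun _ hp => shannonEntropy_nonneg hp.1

theorem relativeFrequency_mem_weightsWithMean {c : ι → ℕ} (hc : ∑ i, c i ≠ 0)
    (hmean : ∑ i, c i • A i = (∑ i, c i) • v) : relativeFrequency c ∈ weightsWithMean A v := by
  refine ⟨relativeFrequency_mem_stdSimplex hc, ?_⟩
  rw [← smul_right_inj (Nat.cast_ne_zero (R := ℝ).2 hc), smul_sum, Nat.cast_smul_eq_nsmul ℝ _ v,
    ← hmean]
  simp only [smul_smul, sum_mul_relativeFrequency, Nat.cast_smul_eq_nsmul]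

theorem log_card_le_mul_maxEntropy {M : ℕ} {W : Finset (Fin M → ι)}
    (hW : ∀ f ∈ W, ∑ m, A (f m) = M • v) : Real.log #W ≤ M * maxEntropy A v := by
  classical
  rcases W.eq_empty_or_nonempty with rfl | hne
  · simpa using mul_nonneg M.cast_nonneg maxEntropy_nonneg
  have hle := log_card_le_mul_shannonEntropy W
  rcases M.eq_zero_or_pos with rfl | hM
  · simpa only [Nat.cast_zero, zero_mul] using hle
  have hcount : ∑ i, totalLetterCount W i ≠ 0 := by
    rw [sum_totalLetterCount]
    exact (Nat.mul_pos hne.card_pos hM).ne'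
  have hmean : ∑ i, totalLetterCount W i • A i = (∑ i, totalLetterCount W i) • v := by
    rw [sum_totalLetterCount_smul, sum_congr rfl hW, sum_const, sum_totalLetterCount, mul_smul]
  exact hle.trans <| mul_le_mul_of_nonneg_left
    (shannonEntropy_le_maxEntropy (relativeFrequency_mem_weightsWithMean hcount hmean))
    M.cast_nonneg

end MaxEntropy

theorem map_natCast_nsmul_eq_smul {m m' : Type*} {N : ℕ} {k : Matrix m m' ℕ} {γ : Matrix m m' ℝ}
    (hkγ : k.map Nat.cast = (N : ℝ) • γ) (t : ℕ) :
    (t • k).map Nat.cast = ((t * N : ℕ) : ℝ) • γ := by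
  rw [Nat.cast_mul, mul_smul, ← hkγ, Nat.cast_smul_eq_nsmul]
  exact map_nsmul (Nat.castAddMonoidHom ℝ).mapMatrix t k

section BirkhoffEntropy

variable {m : Type*} [Fintype m] [DecidableEq m] {n : ℕ}

/-- The probability distributions on permutations whose mean permutation matrix is `γ`, that is,
the Birkhoff–von Neumann decompositions of `γ`. -/
abbrev birkhoffWeights (γ : Matrix m m ℝ) : Set (Equiv.Perm m → ℝ) :=
  weightsWithMean (fun σ => σ.permMatrix ℝ) γ

/-- The largest Shannon entropy of a Birkhoff–von Neumann decomposition of `γ`, written `H'_G(γ)` in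
the paper. -/
abbrev birkhoffEntropy (γ : Matrix m m ℝ) : ℝ :=
  maxEntropy (fun σ : Equiv.Perm m => σ.permMatrix ℝ) γ

theorem birkhoffWeights_nonempty {γ : Matrix m m ℝ}
    (hγ : γ ∈ doublyStochastic ℝ m) : (birkhoffWeights γ).Nonempty := by
  obtain ⟨p, hp, hsum, hmean⟩ := exists_eq_sum_perm_of_mem_doublyStochastic hγ
  exact ⟨p, ⟨hp, hsum⟩, hmean⟩

theorem map_natCast_permMat (σ : Equiv.Perm (Fin n)) :
    (permMat σ).map (Nat.cast : ℕ → ℝ) = σ.permMatrix ℝ := by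
  ext i j
  simp [permMat, Equiv.Perm.permMatrix, PEquiv.toMatrix_apply, eq_comm]

theorem mem_birkhoffWeights {γ : Matrix (Fin n) (Fin n) ℝ} {p : Equiv.Perm (Fin n) → ℝ} :
    p ∈ birkhoffWeights γ ↔
      (∀ σ, 0 ≤ p σ) ∧ ∑ σ, p σ = 1 ∧ ∀ i j, ∑ σ, p σ * (permMat σ i j : ℝ) = γ i j := by
  simp only [birkhoffWeights, weightsWithMean, stdSimplex, Set.mem_ofPred_eq, and_assoc,
    ← map_natCast_permMat, ← Matrix.ext_iff, Matrix.sum_apply, Matrix.smul_apply,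
    Matrix.map_apply, smul_eq_mul]

theorem isDS_sum_smul_permMat (c : Equiv.Perm (Fin n) → ℕ) :
    isDS (∑ σ, c σ) n (∑ σ, c σ • permMat σ) := by
  have hrow (σ : Equiv.Perm (Fin n)) (i : Fin n) : ∑ j, permMat σ i j = 1 := by simp [permMat]
  have hcol (σ : Equiv.Perm (Fin n)) (j : Fin n) : ∑ i, permMat σ i j = 1 := by
    simp [permMat, ← Equiv.eq_symm_apply]
  constructor <;> intro i <;>
    simp only [Matrix.sum_apply, Matrix.smul_apply, smul_eq_mul, sum_comm (s := univ (α := Fin n)),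
      ← mul_sum, hrow, hcol, mul_one]

namespace isDS

variable {M L : ℕ} {k l : Matrix (Fin n) (Fin n) ℕ}

theorem sub (hk : isDS M n k) (hl : isDS L n l) (hle : ∀ i j, l i j ≤ k i j) :
    isDS (M - L) n (k - l) :=
  ⟨fun i => by simp only [Matrix.sub_apply, sum_tsub_distrib _ fun j _ => hle i j, hk.1, hl.1],
    fun j => by simp only [Matrix.sub_apply, sum_tsub_distrib _ fun i _ => hle i j, hk.2, hl.2]⟩

theorem smul (hk : isDS M n k) (t : ℕ) : isDS (t * M) n (t • k) :=
  ⟨fun i => by simp only [Matrix.smul_apply, smul_eq_mul, ← mul_sum, hk.1],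
    fun j => by simp only [Matrix.smul_apply, smul_eq_mul, ← mul_sum, hk.2]⟩

theorem exists_mem_doublyStochastic (hk : isDS M n k) :
    ∃ γ ∈ doublyStochastic ℝ (Fin n), k.map Nat.cast = (M : ℝ) • γ := by
  refine (exists_mem_doublyStochastic_eq_smul_iff M.cast_nonneg).2
    ⟨fun i j => Nat.cast_nonneg _, fun i => ?_, fun j => ?_⟩
  · simp only [Matrix.map_apply, ← Nat.cast_sum, hk.1]
  · simp only [Matrix.map_apply, ← Nat.cast_sum, hk.2]

theorem exists_permMat_le (hk : isDS M n k) (hM : M ≠ 0) :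
    ∃ σ : Equiv.Perm (Fin n), ∀ i j, permMat σ i j ≤ k i j := by
  obtain ⟨γ, hγ, hkγ⟩ := hk.exists_mem_doublyStochastic
  obtain ⟨p, hp⟩ := birkhoffWeights_nonempty hγ
  obtain ⟨hp0, hp1, hpγ⟩ := mem_birkhoffWeights.1 hp
  obtain ⟨σ, -, hσ⟩ : ∃ σ ∈ univ, 0 < p σ := exists_lt_of_sum_lt (by simp [hp1])
  refine ⟨σ, fun i j => ?_⟩
  by_cases hij : σ i = j
  · have hkij : (k i j : ℝ) = M * γ i j := congrFun₂ hkγ i j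
    have hγij : 0 < γ i j := by
      rw [← hpγ]
      exact sum_pos' (fun τ _ => mul_nonneg (hp0 τ) (Nat.cast_nonneg _))
        ⟨σ, mem_univ _, by simpa [permMat, hij] using hσ⟩
    have hpos : (0 : ℝ) < k i j := by rw [hkij]; positivity
    exact (if_pos hij).trans_le (Nat.cast_pos.1 hpos)
  · exact (if_neg hij).trans_le (Nat.zero_le _)

theorem exists_sum_smul_permMat_eq (hk : isDS M n k) :
    ∃ c : Equiv.Perm (Fin n) → ℕ, ∑ σ, c σ = M ∧ ∑ σ, c σ • permMat σ = k := by
  induction M generalizing k with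
  | zero =>
    refine ⟨0, sum_const_zero, ?_⟩
    ext i j
    simpa using (sum_eq_zero_iff.1 (hk.1 i) j (mem_univ j)).symm
  | succ M ih =>
    obtain ⟨τ, hτ⟩ := hk.exists_permMat_le M.succ_ne_zero
    have hone : isDS 1 n (permMat τ) := by
      simpa [Pi.single_apply] using isDS_sum_smul_permMat (Pi.single τ 1)
    obtain ⟨c, hc, hck⟩ := ih (hk.sub hone hτ)
    refine ⟨c + Pi.single τ 1, by simp [sum_add_distrib, hc], ?_⟩
    have hsum : ∑ σ, (c + Pi.single τ 1 : Equiv.Perm (Fin n) → ℕ) σ • permMat σ =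
        k - permMat τ + permMat τ := by
      simp only [Pi.add_apply, add_smul, sum_add_distrib, hck, Pi.single_apply, ite_smul, one_smul,
        zero_smul, sum_ite_eq', mem_univ, if_true]
    rw [hsum]
    ext i j
    exact Nat.sub_add_cancel (hτ i j)

theorem exists_floor_le_sum_smul_permMat_eq (hk : isDS M n k) {γ : Matrix (Fin n) (Fin n) ℝ}
    (hkγ : k.map Nat.cast = (M : ℝ) • γ) {p : Equiv.Perm (Fin n) → ℝ}
    (hp : p ∈ birkhoffWeights γ) :
    ∃ c : Equiv.Perm (Fin n) → ℕ,
      ∑ σ, c σ = M ∧ ∑ σ, c σ • permMat σ = k ∧ ∀ σ, ⌊p σ * M⌋₊ ≤ c σ := by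
  obtain ⟨hp0, hp1, hpγ⟩ := mem_birkhoffWeights.1 hp
  have hfloor (σ : Equiv.Perm (Fin n)) : (⌊p σ * M⌋₊ : ℝ) ≤ p σ * M :=
    Nat.floor_le (mul_nonneg (hp0 σ) M.cast_nonneg)
  set b : Equiv.Perm (Fin n) → ℕ := fun σ => ⌊p σ * M⌋₊
  have hbM : ∑ σ, b σ ≤ M := by
    rw [← Nat.cast_le (α := ℝ), Nat.cast_sum]
    exact (sum_le_sum fun σ _ => hfloor σ).trans_eq (by rw [← sum_mul, hp1, one_mul])
  have hbk (i j : Fin n) : (∑ σ, b σ • permMat σ) i j ≤ k i j := by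
    rw [← Nat.cast_le (α := ℝ)]
    calc (((∑ σ, b σ • permMat σ) i j : ℕ) : ℝ) = ∑ σ, (b σ : ℝ) * permMat σ i j := by
          simp only [Matrix.sum_apply, Matrix.smul_apply, smul_eq_mul, Nat.cast_sum, Nat.cast_mul]
      _ ≤ ∑ σ, p σ * M * permMat σ i j :=
          sum_le_sum fun σ _ => mul_le_mul_of_nonneg_right (hfloor σ) (Nat.cast_nonneg _)
      _ = M * γ i j := by rw [← hpγ, mul_sum]; exact sum_congr rfl fun σ _ => by ring
      _ = k i j := (congrFun₂ hkγ i j).symm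
  obtain ⟨r, hr, hrk⟩ := (hk.sub (isDS_sum_smul_permMat b) hbk).exists_sum_smul_permMat_eq
  refine ⟨b + r, ?_, ?_, fun σ => Nat.le_add_right _ _⟩
  · simp only [Pi.add_apply, sum_add_distrib, hr, Nat.add_sub_cancel' hbM]
  · simp only [Pi.add_apply, add_smul, sum_add_distrib, hrk]
    ext i j
    exact Nat.add_sub_cancel' (hbk i j)

end isDS

theorem Ccoef_eq_card (M n : ℕ) (k : Matrix (Fin n) (Fin n) ℕ) :
    Ccoef M n k = #{f : Fin M → Equiv.Perm (Fin n) | ∑ m, permMat (f m) = k} := by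
  rw [Ccoef, Nat.card_eq_fintype_card, Fintype.card_subtype]

theorem log_Ccoef_le {M : ℕ} {k : Matrix (Fin n) (Fin n) ℕ} {γ : Matrix (Fin n) (Fin n) ℝ}
    (hkγ : k.map Nat.cast = (M : ℝ) • γ) : Real.log (Ccoef M n k) ≤ M * birkhoffEntropy γ := by
  rw [Ccoef_eq_card]
  refine log_card_le_mul_maxEntropy fun f hf => ?_
  rw [← Nat.cast_smul_eq_nsmul ℝ, ← hkγ, ← (mem_filter.1 hf).2]
  simp only [← map_natCast_permMat]
  exact (map_sum (Nat.castAddMonoidHom ℝ).mapMatrix _ _).symm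

theorem multinomial_le_Ccoef (c : Equiv.Perm (Fin n) → ℕ) :
    Nat.multinomial univ c ≤ Ccoef (∑ σ, c σ) n (∑ σ, c σ • permMat σ) := by
  rw [Ccoef_eq_card, ← card_letterCount_eq]
  refine card_le_card <| monotone_filter_right _ fun f _ hf => ?_
  rw [← sum_letterCount_smul f permMat, hf]

theorem eventually_lt_log_Ccoef_div {N : ℕ} (hN : N ≠ 0) {k : Matrix (Fin n) (Fin n) ℕ}
    (hk : isDS N n k) {γ : Matrix (Fin n) (Fin n) ℝ} (hkγ : k.map Nat.cast = (N : ℝ) • γ)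
    {p : Equiv.Perm (Fin n) → ℝ} (hp : p ∈ birkhoffWeights γ) {a : ℝ}
    (ha : a < shannonEntropy p) :
    ∀ᶠ t : ℕ in atTop, a < Real.log (Ccoef (t * N) n (t • k)) / (t * N : ℕ) := by
  choose c hsum hmean hfloor using fun t : ℕ =>
    (hk.smul t).exists_floor_le_sum_smul_permMat_eq (map_natCast_nsmul_eq_smul hkγ t) hp
  have htop : Tendsto (fun t => ∑ σ, c t σ) atTop atTop := by
    simpa only [hsum, id] using tendsto_id.atTop_mul_const' (Nat.pos_of_ne_zero hN)
  have hfreq := tendsto_relativeFrequency_of_floor_le hp.1 htop (by simpa only [hsum] using hfloor)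
  filter_upwards [(tendsto_log_multinomial_div htop hfreq).eventually_const_lt ha] with t ht
  have hle := multinomial_le_Ccoef (c t)
  rw [hsum] at ht
  rw [hsum, hmean] at hle
  have hmul := Nat.multinomial_pos univ (c t)
  exact ht.trans_le (by gcongr)

theorem log_Ccoef_div_le {N : ℕ} {k : Matrix (Fin n) (Fin n) ℕ} {γ : Matrix (Fin n) (Fin n) ℝ}
    (hkγ : k.map Nat.cast = (N : ℝ) • γ) (t : ℕ) :
    Real.log (Ccoef (t * N) n (t • k)) / (t * N : ℕ) ≤ birkhoffEntropy γ :=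
  div_le_of_le_mul₀ (Nat.cast_nonneg _) maxEntropy_nonneg <|
    (log_Ccoef_le (map_natCast_nsmul_eq_smul hkγ t)).trans_eq (mul_comm _ _)

theorem tendsto_log_Ccoef_div {N : ℕ} (hN : N ≠ 0) {k : Matrix (Fin n) (Fin n) ℕ}
    (hk : isDS N n k) {γ : Matrix (Fin n) (Fin n) ℝ} (hkγ : k.map Nat.cast = (N : ℝ) • γ) :
    Tendsto (fun t : ℕ => Real.log (Ccoef (t * N) n (t • k)) / (t * N : ℕ)) atTop
      (𝓝 (birkhoffEntropy γ)) := by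
  refine tendsto_order.2 ⟨fun a ha => ?_, fun a ha => Eventually.of_forall fun t =>
    (log_Ccoef_div_le hkγ t).trans_lt ha⟩
  obtain ⟨γ', hγ', hkγ'⟩ := hk.exists_mem_doublyStochastic
  obtain rfl : γ = γ' := smul_right_injective _ (Nat.cast_ne_zero.2 hN) (hkγ.symm.trans hkγ')
  obtain ⟨_, ⟨p, hp, rfl⟩, hap⟩ :=
    exists_lt_of_lt_csSup ((birkhoffWeights_nonempty hγ').image shannonEntropy) ha
  exact eventually_lt_log_Ccoef_div hN hk hkγ hp hap

theorem birkhoffEntropy_eq_sSup (γ : Matrix (Fin n) (Fin n) ℝ) :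
    birkhoffEntropy γ = sSup {h : ℝ | ∃ p : Equiv.Perm (Fin n) → ℝ,
      (∀ σ, 0 ≤ p σ) ∧ (∑ σ, p σ) = 1 ∧
      (∀ i j, (∑ σ : Equiv.Perm (Fin n), p σ * (if σ i = j then (1 : ℝ) else 0)) = γ i j) ∧
      h = -∑ σ : Equiv.Perm (Fin n), p σ * Real.log (p σ)} := by
  refine congrArg sSup (Set.ext fun h => exists_congr fun p => ?_)
  simp only [mem_birkhoffWeights, permMat, Matrix.of_apply, Nat.cast_ite, Nat.cast_one,
    Nat.cast_zero, and_assoc, shannonEntropy, Real.negMulLog, neg_mul, sum_neg_distrib, eq_comm]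

end BirkhoffEntropy

/-- Fix `n, N ≥ 1` and `k ∈ K(N,n)` and let `γ(i,j) = k(i,j)/N`. Then
`log(C_{tN,n}(t·k))/(tN) → H'_G(γ)` as `t → ∞`, where `H'_G(γ)` is the supremum of the
Shannon entropies of probability distributions `p` on `S_n` with `Σ_σ p(σ)·P_σ = γ`. -/
theorem statement_11 (n N : ℕ) (hn : 1 ≤ n) (hN : 1 ≤ N)
    (k : Matrix (Fin n) (Fin n) ℕ) (hk : isDS N n k) :
    Filter.Tendsto
      (fun t : ℕ =>
        Real.log (Ccoef (t * N) n (Matrix.of fun i j => t * k i j)) / ((t * N : ℕ) : ℝ))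
      Filter.atTop
      (nhds (sSup {h : ℝ | ∃ p : Equiv.Perm (Fin n) → ℝ,
        (∀ σ, 0 ≤ p σ) ∧ (∑ σ, p σ) = 1 ∧
        (∀ i j, (∑ σ : Equiv.Perm (Fin n), p σ * (if σ i = j then (1 : ℝ) else 0)) =
          (k i j : ℝ) / N) ∧
        h = -∑ σ : Equiv.Perm (Fin n), p σ * Real.log (p σ)})) := by
  have hkγ : k.map Nat.cast = (N : ℝ) • Matrix.of fun i j => (k i j : ℝ) / N := by
    ext i j
    exact (mul_div_cancel₀ _ (by positivity)).symm
  have hlim := tendsto_log_Ccoef_div (Nat.ne_of_gt hN) hk hkγ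
  rwa [birkhoffEntropy_eq_sSup] at hlim
end
end
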